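/- arXiv:2410.11353 — 2 statements merged into one kernel-verified Lean document; each statement's English description precedes it below -/
import Mathlib

section
/- Let p ≥ 5 be a prime, and let a_{(p−1)/2} ∈ F_p[s,t] be the leading coefficient in X of θ_{s,t}(X) with θ_{s,t}(x^p) = ψ_{p,s,t}(x) mod p. Then a_{(p−1)/2} is squarefree: for any prime divisor Q of a_{(p−1)/2} in K[s,t], Q² does not divide a_{(p−1)/2}. -/
open WeierstrassCurve Polynomial

/-- The Weierstrass curve `y² = x³ + sx + t` over the polynomial ring `R[s,t]`, where
`s = X 0` and `t = X 1` in `MvPolynomial (Fin 2) R`. -/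
noncomputable def Wst (R : Type*) [CommRing R] : WeierstrassCurve (MvPolynomial (Fin 2) R) :=
  { a₁ := 0, a₂ := 0, a₃ := 0, a₄ := MvPolynomial.X 0, a₆ := MvPolynomial.X 1 }

section alg
variable {F : Type*} [Field F]

/-- chord: derivative of x-coordinate -/
lemma chord_alg {s t x y X Y l dl n : F} (hne : X - x ≠ 0) (h1 : y ^ 2 = x ^ 3 + s * x + t)
    (h2 : Y ^ 2 = X ^ 3 + s * X + t) (hl : l * (X - x) = Y - y)
    (hdl : dl * (X - x) + l * (2 * n * Y - 2 * y) = n * (3 * X ^ 2 + s) - (3 * x ^ 2 + s)) :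
    (2 * l * dl - 2 * n * Y - 2 * y = 2 * (n + 1) * (-(l * ((l ^ 2 - X - x) - X) + Y))) ∧
    (-(dl * ((l ^ 2 - X - x) - X) + l * (2 * l * dl - 2 * n * Y - 2 * y - 2 * n * Y)
      + n * (3 * X ^ 2 + s)) = (n + 1) * (3 * (l ^ 2 - X - x) ^ 2 + s)) := by
  have hY : Y = y + l * (X - x) := by linear_combination -hl
  subst hY
  have E1 : l ^ 2 * (X - x) + 2 * l * y - (X ^ 2 + X * x + x ^ 2) - s = 0 := by
    apply mul_left_cancel₀ hne
    linear_combination h2 - h1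
  have hs : s = l ^ 2 * (X - x) + 2 * l * y - (X ^ 2 + X * x + x ^ 2) := by linear_combination -E1
  subst hs
  have hd : dl = n * (2 * X + x) - n * l ^ 2  + (X + 2 * x) - l^2 := by
    apply mul_left_cancel₀ hne
    linear_combination hdl
  subst hd
  constructor <;> ring

lemma dbl_alg {s t x y l dl : F} (hne : 2 * y ≠ 0) (h1 : y ^ 2 = x ^ 3 + s * x + t)
    (hl : l * (2 * y) = 3 * x ^ 2 + s)
    (hdl : dl * (2 * y) + l * (2 * (3 * x ^ 2 + s)) = 6 * x * (2 * y)) :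
    (2 * l * dl - 2 * y - 2 * y = 2 * (1 + 1) * (-(l * ((l ^ 2 - x - x) - x) + y))) ∧
    (-(dl * ((l ^ 2 - x - x) - x) + l * (2 * l * dl - 2 * y - 2 * y - 2 * y)
      + (3 * x ^ 2 + s)) = (1 + 1) * (3 * (l ^ 2 - x - x) ^ 2 + s)) := by
  have hs : s = l * (2 * y) - 3 * x ^ 2 := by linear_combination -hl
  subst hs
  have hd : dl = 6 * x - 2 * l ^ 2 := by
    apply mul_left_cancel₀ hne
    linear_combination hdl
  subst hd
  constructor <;> ring

end alg

section pts
variable {F : Type*} [Field F]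

/-- short Weierstrass curve over a field -/
def Esh (s t : F) : WeierstrassCurve F := ⟨0, 0, 0, s, t⟩

lemma Esh_eq {s t x y : F} (h : (Esh s t).toAffine.Nonsingular x y) :
    y ^ 2 = x ^ 3 + s * x + t := by
  have := (WeierstrassCurve.Affine.equation_iff _ _).mp h.1
  simpa [Esh] using this

lemma Esh_ns [CharZero F] {s t x y : F} (hy : y ≠ 0) (h : y ^ 2 = x ^ 3 + s * x + t) :
    (Esh s t).toAffine.Nonsingular x y := by
  rw [WeierstrassCurve.Affine.nonsingular_iff, WeierstrassCurve.Affine.equation_iff]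
  refine ⟨by simpa [Esh] using h, Or.inr ?_⟩
  simp only [Esh]
  intro h
  apply hy
  have : (2 : F) * y = 0 := by linear_combination h
  simpa using this

variable [CharZero F] [DecidableEq F]

lemma pts_exist (D : Derivation ℤ F F) {s t x y : F} (hs : D s = 0)
    (hx : D x = 2 * y) (hy : D y = 3 * x ^ 2 + s) (hy0 : y ≠ 0)
    (h : (Esh s t).toAffine.Nonsingular x y) (n : ℕ) :
    ∃ X Y, ∃ h' : (Esh s t).toAffine.Nonsingular X Y,
      (n + 1) • (Affine.Point.some x y h) = Affine.Point.some X Y h' ∧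
      D X = 2 * (n + 1 : F) * Y ∧ D Y = (n + 1 : F) * (3 * X ^ 2 + s) := by
  have D2 : D 2 = 0 := by exact_mod_cast D.map_natCast 2
  have D3 : D 3 = 0 := by exact_mod_cast D.map_natCast 3
  have hc := Esh_eq h
  have h2y : 2 * y ≠ 0 := by simpa using hy0
  induction n with
  | zero => exact ⟨x, y, h, by simp, by simp [hx], by simp [hy]⟩
  | succ n ih =>
    obtain ⟨X, Y, h', hP, hX, hY⟩ := ih
    have hC := Esh_eq h'
    have n2 : (n : F) + 1 + 1 ≠ 0 := by exact_mod_cast (n + 1).succ_ne_zero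
    have hsum : (n + 1 + 1) • (Affine.Point.some x y h) =
        Affine.Point.some X Y h' + Affine.Point.some x y h := by
      rw [succ_nsmul, hP]
    have hxy : ¬ (X = x ∧ Y = (Esh s t).toAffine.negY x y) := by
      rintro ⟨rfl, rfl⟩
      have : (Esh s t).toAffine.negY X y = -y := by simp [Affine.negY, Esh]
      rw [this, hx] at hX
      have : y * ((n : F) + 1 + 1) = 0 := by linear_combination hX / 2
      simp_all
    rw [hsum, Affine.Point.add_some hxy]
    refine ⟨_, _, _, rfl, ?_⟩
    set l := (Esh s t).toAffine.slope X x Y y with hl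
    have e1 : (Esh s t).toAffine.addX X x l = l ^ 2 - X - x := by
      simp [Affine.addX, Esh]
    have e2 : (Esh s t).toAffine.addY X x Y l = -(l * ((l ^ 2 - X - x) - X) + Y) := by
      simp [Affine.addY, Affine.negAddY, Affine.negY, Affine.addX, Esh]
    rw [e1, e2]
    have d1 : D (l ^ 2 - X - x) = 2 * l * D l - D X - D x := by
      simp only [map_sub, Derivation.leibniz_pow, smul_eq_mul]
      simp; ring
    have d2 : D (-(l * ((l ^ 2 - X - x) - X) + Y)) =
      -(D l * ((l ^ 2 - X - x) - X) + l * (D (l ^ 2 - X - x) - D X) + D Y) := by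
      rw [map_neg, map_add, D.leibniz, map_sub D (l ^ 2 - X - x)]
      simp only [smul_eq_mul]; ring
    rw [d2, d1]
    push_cast
    by_cases hXx : X = x
    · subst hXx
      have hYy : Y = y := by
        rcases Affine.Y_eq_of_X_eq h'.1 h.1 rfl with h3 | h3
        · exact h3
        · exact absurd ⟨rfl, h3⟩ hxy
      subst hYy
      have hn : (n : F) = 0 := by
        rw [hx] at hX
        have : Y * (n : F) = 0 := by linear_combination -hX / 2
        simpa [hy0] using this
      have hl' : l * (2 * Y) = 3 * X ^ 2 + s := by
        rw [hl, Affine.slope_of_Y_ne rfl (fun h3 => hxy ⟨rfl, h3⟩)]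
        simp only [Affine.negY, Esh]
        have : Y - (-Y - 0 * X - 0) = 2 * Y := by ring
        rw [this, div_mul_cancel₀ _ h2y]; ring
      have hd := congrArg D hl'
      simp only [D.leibniz, map_add, Derivation.leibniz_pow, smul_eq_mul, D2, D3, hs, hx, hy] at hd
      simp at hd
      have := dbl_alg (dl := D l) h2y hc hl' (by linear_combination hd)
      rw [hx, hy, hn]
      simp only [zero_add]
      exact this
    · have hne : X - x ≠ 0 := sub_ne_zero.mpr hXx
      have hl' : l * (X - x) = Y - y := by
        rw [hl, Affine.slope_of_X_ne hXx, div_mul_cancel₀ _ hne]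
      have hd := congrArg D hl'
      simp only [D.leibniz, map_sub, smul_eq_mul, hX, hY, hx, hy] at hd
      rw [hX, hY, hx]
      exact chord_alg hne hc hC hl' (by linear_combination hd)

/-- The multiples of the generic point and their basic properties. -/
lemma pts_main (D : Derivation ℤ F F) {s t x y : F} (hs : D s = 0)
    (hx : D x = 2 * y) (hy : D y = 3 * x ^ 2 + s) (hy0 : y ≠ 0)
    (hc : y ^ 2 = x ^ 3 + s * x + t) :
    ∃ X Y : ℕ → F, X 1 = x ∧ Y 1 = y ∧ 
      (∀ n, 1 ≤ n → Y n ^ 2 = X n ^ 3 + s * X n + t ∧ D (X n) = 2 * n * Y n ∧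
        D (Y n) = n * (3 * X n ^ 2 + s)) ∧
      (∀ m n, 1 ≤ n → n < m → X m ≠ X n ∧
        X (m + n) = ((Y m - Y n) / (X m - X n)) ^ 2 - X m - X n ∧
        X (m - n) = ((Y m + Y n) / (X m - X n)) ^ 2 - X m - X n) ∧
      X 2 = ((3 * x ^ 2 + s) / (2 * y)) ^ 2 - 2 * x := by
  have h := Esh_ns hy0 hc
  have h2y : 2 * y ≠ 0 := by simpa using hy0
  set P := Affine.Point.some x y h with hPdef
  have key := pts_exist D hs hx hy hy0 h
  choose X Y hns hP hX hY using key
  have uniq : ∀ {a b a' b' : F} {k : (Esh s t).toAffine.Nonsingular a b}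
    {k' : (Esh s t).toAffine.Nonsingular a' b'}, Affine.Point.some a b k = Affine.Point.some a' b' k'
      → a = a' ∧ b = b' := by
    intro a b a' b' k k' e
    simpa using e
  have hP' : ∀ n, 1 ≤ n → n • P = Affine.Point.some (X (n - 1)) (Y (n - 1)) (hns (n - 1)) := by
    intro n hn
    obtain ⟨k, rfl⟩ := Nat.exists_eq_add_of_le' hn
    exact hP k
  have hnz : ∀ n, 1 ≤ n → n • P ≠ 0 := by
    intro n hn
    rw [hP' n hn]
    exact Affine.Point.some_ne_zero _
  have h1 : X 0 = x ∧ Y 0 = y := by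
    have := hP 0
    rw [zero_add, one_smul] at this
    exact ⟨(uniq this).1.symm, (uniq this).2.symm⟩
  refine ⟨fun n => X (n - 1), fun n => Y (n - 1), h1.1, h1.2, ?_, ?_, ?_⟩
  · intro n hn
    obtain ⟨k, rfl⟩ := Nat.exists_eq_add_of_le' hn
    refine ⟨Esh_eq (hns _), ?_, ?_⟩
    · simpa using hX k
    · simpa using hY k
  · intro m n hn hmn
    have hm := hn.trans hmn.le
    have hne : X (m - 1) ≠ X (n - 1) := by
      intro e
      have := (Affine.Point.X_eq_iff (h₁ := hns (m - 1)) (h₂ := hns (n - 1))).mp e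
      rw [← hP' m hm, ← hP' n hn] at this
      rcases this with e | e
      · apply hnz (m - n) (by omega)
        have : m • P = (m - n) • P + n • P := by rw [← add_smul]; congr 1; omega
        rw [this] at e
        simpa using e
      · apply hnz (m + n) (by omega)
        rw [add_smul, e]; simp
    refine ⟨hne, ?_, ?_⟩
    · have e := hP' (m + n) (by omega)
      rw [add_smul, hP' m hm, hP' n hn, Affine.Point.add_of_X_ne hne] at e
      have := (uniq e).1
      simp only []
      rw [← this, Affine.slope_of_X_ne hne]
      simp [Affine.addX, Esh]
    · have e := hP' (m - n) (by omega)
      have e' : (m - n) • P = m • P + -(n • P) := by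
        have : m • P = (m - n) • P + n • P := by rw [← add_smul]; congr 1; omega
        rw [this]; simp
      rw [e', hP' m hm, hP' n hn, Affine.Point.neg_some, Affine.Point.add_of_X_ne hne] at e
      have := (uniq e).1
      simp only []
      rw [← this, Affine.slope_of_X_ne hne]
      simp [Affine.addX, Esh, Affine.negY]
  · have e := hP 1
    have hY : y ≠ (Esh s t).toAffine.negY x y := by
      simp only [Affine.negY, Esh]
      intro h3
      apply h2y; linear_combination h3
    rw [show (1 + 1 : ℕ) = 2 from rfl, two_smul, Affine.Point.add_self_of_Y_ne hY] at e
    have := (uniq e).1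
    simp only []
    rw [show (2 - 1 : ℕ) = 1 from rfl, ← this, Affine.slope_of_Y_ne rfl hY]
    simp only [Affine.addX, Esh, Affine.negY]
    ring

end pts

section tau
variable {F : Type*} [Field F]

/-- symmetric biquadratic-type form -/
def Qf (s t z a b : F) : F :=
  (a * b - s) ^ 2 - 4 * t * (a + b) - z * (2 * (a * b + s) * (a + b) + 4 * t) + z ^ 2 * (a - b) ^ 2

lemma Qf_symm (s t z a b : F) : Qf s t z a b = Qf s t b a z := by unfold Qf; ring

lemma pq_id {s t a b y z : F} (hab : a ≠ b) (ha : y ^ 2 = a ^ 3 + s * a + t)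
    (hb : z ^ 2 = b ^ 3 + s * b + t) :
    ∃ p q, p = (y - z) / (a - b) ∧ q = (y + z) / (a - b) ∧ p * (a - b) = y - z ∧
      q * (a - b) = y + z ∧ p * q * (a - b) = a ^ 2 + a * b + b ^ 2 + s := by
  have hne : a - b ≠ 0 := sub_ne_zero.mpr hab
  refine ⟨_, _, rfl, rfl, div_mul_cancel₀ _ hne, div_mul_cancel₀ _ hne, ?_⟩
  field_simp
  linear_combination ha - hb

lemma prod_id {s t a b y z : F} (w : F) (hab : a ≠ b) (ha : y ^ 2 = a ^ 3 + s * a + t)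
    (hb : z ^ 2 = b ^ 3 + s * b + t) :
    ((((y - z) / (a - b)) ^ 2 - a - b) - w) * ((((y + z) / (a - b)) ^ 2 - a - b) - w)
      * (a - b) ^ 2 = Qf s t w a b := by
  obtain ⟨p, q, hp, hq, h1, h2, h3⟩ := pq_id hab ha hb
  rw [← hp, ← hq]
  have hk : (p ^ 2 + q ^ 2) * (a - b) ^ 2 = 2 * (a ^ 3 + s * a + t + (b ^ 3 + s * b + t)) := by
    rw [← ha, ← hb]
    linear_combination (p * (a - b) + (y - z)) * h1 + (q * (a - b) + (y + z)) * h2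
  have : (p ^ 2 - a - b - w) * (q ^ 2 - a - b - w) * (a - b) ^ 2 = (p * q * (a - b)) ^ 2
    - (a + b + w) * ((p ^ 2 + q ^ 2) * (a - b) ^ 2) + (a + b + w) ^ 2 * (a - b) ^ 2 := by ring
  rw [this, h3, hk]
  unfold Qf
  ring

lemma sum_id {s t a b y z : F} (hab : a ≠ b) (ha : y ^ 2 = a ^ 3 + s * a + t)
    (hb : z ^ 2 = b ^ 3 + s * b + t) :
    ((((y - z) / (a - b)) ^ 2 - a - b) + (((y + z) / (a - b)) ^ 2 - a - b))
      * (a - b) ^ 2 = 2 * (a * b + s) * (a + b) + 4 * t := by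
  obtain ⟨p, q, hp, hq, h1, h2, h3⟩ := pq_id hab ha hb
  rw [← hp, ← hq]
  have hk : (p ^ 2 + q ^ 2) * (a - b) ^ 2 = 2 * (a ^ 3 + s * a + t + (b ^ 3 + s * b + t)) := by
    rw [← ha, ← hb]
    linear_combination (p * (a - b) + (y - z)) * h1 + (q * (a - b) + (y + z)) * h2
  linear_combination hk

lemma toda_alg {s t x y X Y n : F} (hab : X ≠ x) (ha : Y ^ 2 = X ^ 3 + s * X + t)
    (hb : y ^ 2 = x ^ 3 + s * x + t) :
    ((2 * (3 * x ^ 2 + s) - 2 * n ^ 2 * (3 * X ^ 2 + s)) * (x - X) - (2 * y - 2 * n * Y) ^ 2)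
      / (x - X) ^ 2 = (n + 1) ^ 2 * (x - (((Y - y) / (X - x)) ^ 2 - X - x))
        + (n - 1) ^ 2 * (x - (((Y + y) / (X - x)) ^ 2 - X - x)) - 2 * n ^ 2 * (x - X) := by
  have hne : x - X ≠ 0 := sub_ne_zero.mpr hab.symm
  obtain ⟨p, q, hp, hq, h1, h2, h3⟩ := pq_id hab ha hb
  rw [← hp, ← hq, div_eq_iff (pow_ne_zero _ hne)]
  have hs : s = p * q * (X - x) - (X ^ 2 + X * x + x ^ 2) := by linear_combination -h3
  have hY : 2 * Y = (p + q) * (X - x) := by linear_combination -h1 - h2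
  have hy : 2 * y = (q - p) * (X - x) := by linear_combination h1 - h2
  rw [hs, hy, show 2 * n * Y = n * (2 * Y) by ring, hY]
  ring

variable [CharZero F]

/-- A sequence with prescribed Toda-type ratio. -/
noncomputable def tauS (y x : F) (X : ℕ → F) : ℕ → F
  | 0 => 0
  | 1 => 1
  | 2 => 2 * y
  | n + 3 => tauS y x X (n + 2) ^ 2 * (x - X (n + 2)) / tauS y x X (n + 1)

variable {s t x y : F} {X Y : ℕ → F}

lemma tauS_ne (hy0 : y ≠ 0) (hX : ∀ n, 2 ≤ n → X n ≠ x) (n : ℕ) : tauS y x X (n + 1) ≠ 0 := by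
  induction n using Nat.strong_induction_on with
  | _ n ih =>
    match n with
    | 0 => simp [tauS]
    | 1 => simpa [tauS] using hy0
    | n + 2 =>
      rw [tauS]
      exact div_ne_zero (mul_ne_zero (pow_ne_zero _ (ih (n + 1) (by omega)))
        (sub_ne_zero.mpr (hX _ (by omega)).symm)) (ih n (by omega))

lemma tauS_rel (hy0 : y ≠ 0) (hX1 : X 1 = x) (hX : ∀ n, 2 ≤ n → X n ≠ x) (n : ℕ) :
    tauS y x X (n + 2) * tauS y x X n = tauS y x X (n + 1) ^ 2 * (x - X (n + 1)) := by
  match n with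
  | 0 => simp [tauS, hX1]
  | n + 1 =>
    rw [tauS, div_mul_cancel₀ _ (tauS_ne hy0 hX _)]

lemma tauS_G (hy0 : y ≠ 0) (hX1 : X 1 = x) (hY1 : Y 1 = y)
    (hcur : ∀ n, 1 ≤ n → Y n ^ 2 = X n ^ 3 + s * X n + t)
    (hadd : ∀ m n, 1 ≤ n → n < m → X m ≠ X n ∧
        X (m + n) = ((Y m - Y n) / (X m - X n)) ^ 2 - X m - X n ∧
        X (m - n) = ((Y m + Y n) / (X m - X n)) ^ 2 - X m - X n)
    (hX2 : X 2 = ((3 * x ^ 2 + s) / (2 * y)) ^ 2 - 2 * x) (n : ℕ) :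
    ∀ k, tauS y x X (2 * (n + 1) + (k + 1)) * tauS y x X (k + 1) =
      tauS y x X (n + 1 + (k + 1)) ^ 2 * tauS y x X (n + 1) ^ 2 * (X (n + 1) - X (n + 1 + (k + 1))) := by
  have hXx : ∀ n, 2 ≤ n → X n ≠ x := fun n hn => hX1 ▸ (hadd n 1 le_rfl (by omega)).1
  have hR := tauS_rel hy0 hX1 hXx
  have hN := tauS_ne hy0 hXx
  set τ := tauS y x X with hτ
  have hPI : ∀ m n w, 1 ≤ n → n < m → (X (m + n) - w) * (X (m - n) - w) * (X m - X n) ^ 2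
      = Qf s t w (X m) (X n) := by
    intro m n w hn hmn
    obtain ⟨h1, h2, h3⟩ := hadd m n hn hmn
    rw [h2, h3]
    exact prod_id w h1 (hcur m (by omega)) (hcur n hn)
  have hc1 := hcur 1 le_rfl
  rw [hX1, hY1] at hc1
  induction n using Nat.strong_induction_on with
  | _ n ih =>
  match n with
  | 0 =>
    intro k
    have := hR (k + 1)
    rw [show 2 * (0 + 1) + (k + 1) = k + 1 + 2 by ring, show 0 + 1 + (k + 1) = k + 1 + 1 by ring, this,
      show τ (0 + 1) = 1 by simp [hτ, tauS], zero_add, hX1]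
    ring
  | 1 =>
    intro k
    -- m = k + 3
    have r1 := hR (k + 3)
    have r2 := hR (k + 1)
    have r3 := hR (k + 2)
    have pi := hPI (k + 3) 1 x le_rfl (by omega)
    rw [show k + 3 - 1 = k + 2 by omega, hX1] at pi
    have t2 : τ 2 = 2 * y := by simp [hτ, tauS]
    have hq : Qf s t x (X (k + 3)) x = (2 * y) ^ 2 * (X 2 - X (k + 3)) := by
      rw [hX2]; unfold Qf; field_simp
      linear_combination (8*x+ 4 * X (k + 3)) * hc1
    rw [hq] at pi
    have h3 := hN (k + 2)
    rw [show 2 * (1 + 1) + (k + 1) = k + 3 + 2 by ring, show 1 + 1 + (k + 1) = k + 3 by ring,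
      show 1 + 1 = 2 by rfl, t2]
    apply mul_right_cancel₀ (pow_ne_zero 2 h3)
    simp only [add_assoc, Nat.reduceAdd] at *
    generalize τ (k + 5) = a5 at *
    generalize τ (k + 4) = a4 at *
    generalize τ (k + 3) = a3 at *
    generalize τ (k + 2) = a2 at *
    generalize τ (k + 1) = a1 at *
    generalize X (k + 4) = x4 at *
    generalize X (k + 3) = x3 at *
    generalize X (k + 2) = x2 at *
    generalize X 2 = x2' at *
    calc a5 * a1 * a3 ^ 2 = (a5 * a3) * (a3 * a1) := by ring
      _ = (a4 * a2) ^ 2 * ((x - x4) * (x - x2)) := by rw [r1, r2]; ring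
      _ = a3 ^ 4 * ((x4 - x) * (x2 - x) * (x3 - x) ^ 2) := by rw [r3]; ring
      _ = _ := by rw [pi]; ring
  | n + 2 =>
    intro k
    -- target (n+3, k+1), m = n+k+4
    have g1 := ih (n + 1) (by omega) (k + 1)
    have g0 := ih n (by omega) (k + 2)
    have rA := hR (2 * n + k + 5)
    have rB := hR (k + 1)
    have rC := hR (n + 1)
    have p1 := hPI (n + k + 4) (n + 2) x (by omega) (by omega)
    have p2 := hPI (n + 2) 1 (X (n + k + 4)) (by omega) (by omega)
    rw [hX1, Qf_symm, show n + 2 - 1 = n + 1 by omega] at p2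
    rw [show n + k + 4 - (n + 2) = k + 2 by omega, Qf_symm] at p1
    have p3 : Qf s t (X (n + 2)) (X (n + k + 4)) x = Qf s t x (X (n + k + 4)) (X (n + 2)) := by
      unfold Qf; ring
    have p4 : Qf s t x (X (n + 2)) (X (n + k + 4)) = Qf s t x (X (n + k + 4)) (X (n + 2)) := by
      unfold Qf; ring
    have hne : τ (2 * n + k + 5) * τ (k + 3) ≠ 0 := mul_ne_zero (hN _) (hN _)
    apply mul_right_cancel₀ hne
    have q1 : (X (n + k + 4 + (n + 2)) - x) * (X (k + 2) - x) * (X (n + k + 4) - X (n + 2)) ^ 2 =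
        (X (n + 2 + 1) - X (n + k + 4)) * (X (n + 1) - X (n + k + 4)) * (X (n + 2) - x) ^ 2 := by
      rw [p1, p2]; unfold Qf; ring
    clear p1 p2 p3 p4 hPI hadd hcur hXx hN ih hR
    ring_nf at *
    generalize τ (5 + n * 2 + k) = a5 at *
    generalize τ (6 + n * 2 + k) = a6 at *
    generalize τ (7 + n * 2 + k) = a7 at *
    generalize τ (3 + k) = b3 at *
    generalize τ (2 + k) = b2 at *
    generalize τ (1 + k) = b1 at *
    generalize τ (3 + n) = c3 at *
    generalize τ (2 + n) = c2 at *
    generalize τ (1 + n) = c1 at *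
    generalize τ (4 + n + k) = m at *
    generalize X (6 + n * 2 + k) = X6 at *
    generalize X (4 + n + k) = XM at *
    generalize X (3 + n) = Xc3 at *
    generalize X (2 + n) = Xc2 at *
    generalize X (1 + n) = Xc1 at *
    generalize X (2 + k) = Xb2 at *
    have g0' : a5 * b3 = m ^ 2 * c1 ^ 2 * (Xc1 - XM) := by linear_combination g0
    have g1' : a6 * b2 = m ^ 2 * c2 ^ 2 * (Xc2 - XM) := by linear_combination g1
    have rA' : a7 * a5 = a6 ^ 2 * (x - X6) := by linear_combination rA
    have rB' : b3 * b1 = b2 ^ 2 * (x - Xb2) := by linear_combination rB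
    have rC' : c3 * c1 = c2 ^ 2 * (x - Xc2) := by linear_combination rC
    have q1' : (X6 - x) * (Xb2 - x) * (XM - Xc2) ^ 2 = (Xc3 - XM) * (Xc1 - XM) * (Xc2 - x) ^ 2 := by
      linear_combination q1
    have : (a7 * b1) * (a5 * b3) = (m ^ 2 * c3 ^ 2 * (Xc3 - XM)) * (a5 * b3) := by
      calc (a7 * b1) * (a5 * b3) = (a7 * a5) * (b3 * b1) := by ring
        _ = (a6 * b2) ^ 2 * ((X6 - x) * (Xb2 - x)) := by rw [rA', rB']; ring
        _ = m ^ 4 * c2 ^ 4 * ((X6 - x) * (Xb2 - x) * (XM - Xc2) ^ 2) := by rw [g1']; ring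
        _ = m ^ 4 * (c2 ^ 2 * (x - Xc2)) ^ 2 * ((Xc3 - XM) * (Xc1 - XM)) := by rw [q1']; ring
        _ = _ := by rw [← rC', g0']; ring
    linear_combination this
end tau

section taueds
variable {F : Type*} [Field F] [CharZero F]
variable {s t x y : F} {X Y : ℕ → F}

lemma tauS_three (hy0 : y ≠ 0) (hc : y ^ 2 = x ^ 3 + s * x + t)
    (hX2 : X 2 = ((3 * x ^ 2 + s) / (2 * y)) ^ 2 - 2 * x) :
    tauS y x X 3 = 3 * x ^ 4 + 6 * s * x ^ 2 + 12 * t * x - s ^ 2 := by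
  have h2 : (2 * y) ^ 2 * X 2 = (3 * x ^ 2 + s) ^ 2 - 8 * x * y ^ 2 := by
    rw [hX2]; field_simp; ring
  simp only [tauS, div_one]
  linear_combination (-1) * h2 + 12 * x * hc

lemma tauS_four (hy0 : y ≠ 0) (hX1 : X 1 = x) (hY1 : Y 1 = y)
    (hcur : ∀ n, 1 ≤ n → Y n ^ 2 = X n ^ 3 + s * X n + t)
    (hadd : ∀ m n, 1 ≤ n → n < m → X m ≠ X n ∧
        X (m + n) = ((Y m - Y n) / (X m - X n)) ^ 2 - X m - X n ∧
        X (m - n) = ((Y m + Y n) / (X m - X n)) ^ 2 - X m - X n)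
    (hX2 : X 2 = ((3 * x ^ 2 + s) / (2 * y)) ^ 2 - 2 * x) :
    tauS y x X 4 = (2 * x ^ 6 + 10 * s * x ^ 4 + 40 * t * x ^ 3 - 10 * s ^ 2 * x ^ 2
      - 8 * s * t * x - 2 * s ^ 3 - 16 * t ^ 2) * (2 * y) := by
  have hXx : ∀ n, 2 ≤ n → X n ≠ x := fun n hn => hX1 ▸ (hadd n 1 le_rfl (by omega)).1
  have hR := tauS_rel hy0 hX1 hXx 2
  have hR1 := tauS_rel hy0 hX1 hXx 1
  have hc := hcur 1 le_rfl
  rw [hX1, hY1] at hc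
  have h2 : (2 * y) ^ 2 * X 2 = (3 * x ^ 2 + s) ^ 2 - 8 * x * y ^ 2 := by
    rw [hX2]; field_simp; ring
  obtain ⟨h21, h3, h1⟩ := hadd 2 1 le_rfl (by omega)
  have hS := sum_id h21 (hcur 2 (by omega)) (hcur 1 le_rfl)
  rw [← h3, ← h1] at hS
  simp only [Nat.reduceAdd, Nat.reduceSub, hX1] at hS hR hR1
  have t2 : tauS y x X 2 = 2 * y := by simp [tauS]
  have t1 : tauS y x X 1 = 1 := by simp [tauS]
  rw [t2] at hR hR1
  rw [t1] at hR1
  have h2y : (2 * y) ≠ 0 := by simpa using hy0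
  apply mul_right_cancel₀ h2y
  rw [hR, show tauS y x X 3 = (2 * y) ^ 2 * (x - X 2) by linear_combination hR1]
  have e : (x - X 2) ^ 2 * (x - X 3) = 2 * x ^ 3 - 2 * s * x - 4 * t - X 2 * (6 * x ^ 2 + 2 * s) := by
    linear_combination -hS
  have e2 : (2 * y) ^ 2 * ((x - X 2) ^ 2 * (x - X 3)) = 2 * x ^ 6 + 10 * s * x ^ 4 + 40 * t * x ^ 3 - 10 * s ^ 2 * x ^ 2
      - 8 * s * t * x - 2 * s ^ 3 - 16 * t ^ 2 := by
    rw [e]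
    linear_combination (-(6 * x ^ 2 + 2 * s)) * h2 + (4 * (2 * x ^ 3 - 2 * s * x - 4 * t) + 8 * x * (6 * x ^ 2 + 2 * s)) * hc
  linear_combination (2 * y) ^ 2 * e2

lemma tauS_eq (hy0 : y ≠ 0) (hX1 : X 1 = x) (hY1 : Y 1 = y)
    (hcur : ∀ n, 1 ≤ n → Y n ^ 2 = X n ^ 3 + s * X n + t)
    (hadd : ∀ m n, 1 ≤ n → n < m → X m ≠ X n ∧
        X (m + n) = ((Y m - Y n) / (X m - X n)) ^ 2 - X m - X n ∧
        X (m - n) = ((Y m + Y n) / (X m - X n)) ^ 2 - X m - X n)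
    (hX2 : X 2 = ((3 * x ^ 2 + s) / (2 * y)) ^ 2 - 2 * x) (n : ℕ) :
    tauS y x X n = normEDS (2 * y) (3 * x ^ 4 + 6 * s * x ^ 2 + 12 * t * x - s ^ 2)
      (2 * x ^ 6 + 10 * s * x ^ 4 + 40 * t * x ^ 3 - 10 * s ^ 2 * x ^ 2
      - 8 * s * t * x - 2 * s ^ 3 - 16 * t ^ 2) n := by
  have hXx : ∀ n, 2 ≤ n → X n ≠ x := fun n hn => hX1 ▸ (hadd n 1 le_rfl (by omega)).1
  have hR := tauS_rel hy0 hX1 hXx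
  have hG := tauS_G hy0 hX1 hY1 hcur hadd hX2
  have h2y : (2 * y) ≠ 0 := by simpa using hy0
  have hc := hcur 1 le_rfl
  rw [hX1, hY1] at hc
  have t2 : tauS y x X 2 = 2 * y := by simp [tauS]
  have t1 : tauS y x X 1 = 1 := by simp [tauS]
  induction n using normEDSRec with
  | zero => simp [tauS]
  | one => simp [tauS]
  | two => simp [tauS]
  | three => rw [tauS_three hy0 hc hX2]; simp only [Nat.cast_ofNat, normEDS_three]
  | four => rw [tauS_four hy0 hX1 hY1 hcur hadd hX2]; simp only [Nat.cast_ofNat, normEDS_four]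
  | even m h1 h2 h3 h4 h5 =>
    apply mul_right_cancel₀ h2y
    push_cast
    rw [normEDS_even]
    rw [show (m : ℤ) + 3 - 1 = (m + 2 : ℕ) by push_cast; ring,
      show (m : ℤ) + 3 - 2 = (m + 1 : ℕ) by push_cast; ring,
      show (m : ℤ) + 3 + 1 = (m + 4 : ℕ) by push_cast; ring,
      show (m : ℤ) + 3 + 2 = (m + 5 : ℕ) by push_cast; ring,
      show (m : ℤ) + 3 = (m + 3 : ℕ) by push_cast; ring,
      ← h1, ← h2, ← h3, ← h4, ← h5]
    have g := hG (m + 1) 1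
    have r1 := hR (m + 3)
    have r2 := hR (m + 1)
    rw [show 2 * (m + 1 + 1) + (1 + 1) = 2 * (m + 3) by ring] at g
    simp only [add_assoc, Nat.reduceAdd] at g r1 r2 ⊢
    rw [t2] at g
    linear_combination g - tauS y x X (m + 2) ^ 2 * r1 + tauS y x X (m + 4) ^ 2 * r2
  | odd m h1 h2 h3 h4 =>
    push_cast
    rw [normEDS_odd]
    rw [show (m : ℤ) + 2 - 1 = (m + 1 : ℕ) by push_cast; ring,
      show (m : ℤ) + 2 + 1 = (m + 3 : ℕ) by push_cast; ring,
      show (m : ℤ) + 2 + 2 = (m + 4 : ℕ) by push_cast; ring,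
      show (m : ℤ) + 2 = (m + 2 : ℕ) by push_cast; ring,
      ← h1, ← h2, ← h3, ← h4]
    have g := hG (m + 1) 0
    have r1 := hR (m + 2)
    have r2 := hR (m + 1)
    rw [show 2 * (m + 1 + 1) + (0 + 1) = 2 * (m + 2) + 1 by ring] at g
    simp only [add_assoc, Nat.reduceAdd] at g r1 r2 ⊢
    rw [t1] at g
    linear_combination g - tauS y x X (m + 2) ^ 2 * r1 + tauS y x X (m + 3) ^ 2 * r2

/-- Toda equation for the tau sequence. -/
lemma tauS_toda (D : Derivation ℤ F F) (hs : D s = 0) (hx : D x = 2 * y)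
    (hy : D y = 3 * x ^ 2 + s) (hy0 : y ≠ 0) (hX1 : X 1 = x) (hY1 : Y 1 = y)
    (hcur : ∀ n, 1 ≤ n → Y n ^ 2 = X n ^ 3 + s * X n + t ∧ D (X n) = 2 * n * Y n ∧
      D (Y n) = n * (3 * X n ^ 2 + s))
    (hadd : ∀ m n, 1 ≤ n → n < m → X m ≠ X n ∧
        X (m + n) = ((Y m - Y n) / (X m - X n)) ^ 2 - X m - X n ∧
        X (m - n) = ((Y m + Y n) / (X m - X n)) ^ 2 - X m - X n)
    (hX2 : X 2 = ((3 * x ^ 2 + s) / (2 * y)) ^ 2 - 2 * x) (n : ℕ) :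
    tauS y x X (n + 1) * D (D (tauS y x X (n + 1))) - (D (tauS y x X (n + 1))) ^ 2 =
      (n + 1) ^ 2 * (x - X (n + 1)) * tauS y x X (n + 1) ^ 2 := by
  have hXx : ∀ n, 2 ≤ n → X n ≠ x := fun n hn => hX1 ▸ (hadd n 1 le_rfl (by omega)).1
  have hN := tauS_ne hy0 hXx
  have hc := (hcur 1 le_rfl).1
  rw [hX1, hY1] at hc
  -- logarithmic derivative version
  have hquot : ∀ f : F, f ≠ 0 → D (D f / f) = (f * D (D f) - (D f) ^ 2) / f ^ 2 := by
    intro f hf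
    have h0 : D f = (D f / f) * f := (div_mul_cancel₀ _ hf).symm
    have h1 : D (D f) = (D f / f) * D f + f * D (D f / f) := by
      conv_lhs => rw [h0, D.leibniz]
      simp [smul_eq_mul]
    rw [h1]; field_simp; ring
  have D2 : ∀ a : F, D (2 * a) = 2 * D a := by
    intro a; rw [two_mul, D.map_add, two_mul]
  have D3 : ∀ a : F, D (3 * a) = 3 * D a := by
    intro a
    rw [show (3 : F) * a = 2 * a + a by ring, D.map_add, D2]; ring
  have Dnat : ∀ (m : ℕ) (a : F), D (m * a) = m * D a := by
    intro m a
    rw [D.leibniz, Derivation.map_natCast]; simp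
  have key : ∀ n, D (D (tauS y x X (n + 1)) / tauS y x X (n + 1)) = ((n + 1 : ℕ) : F) ^ 2 * (x - X (n + 1)) := by
    intro n
    induction n using Nat.strong_induction_on with
    | _ n ih =>
    match n with
    | 0 => simp [tauS, hX1]
    | 1 =>
      have t2 : tauS y x X 2 = 2 * y := by simp [tauS]
      have h2y : (2 * y) ≠ 0 := by simpa using hy0
      rw [hquot _ (hN 1)]
      simp only [Nat.reduceAdd]
      rw [t2, D2, hy, D2, D.map_add, D3, hs, pow_two x, D.leibniz, hx, hX2]
      simp only [smul_eq_mul]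
      field_simp
      push_cast
      ring
    | n + 2 =>
      have ih1 := ih (n + 1) (by omega)
      have ih0 := ih n (by omega)
      obtain ⟨hne, ha, hs'⟩ := hadd (n + 2) 1 le_rfl (by omega)
      obtain ⟨c1, c2, c3⟩ := hcur (n + 2) (by omega)
      rw [hX1, hY1] at ha hs'
      rw [hX1] at hne
      have hT := toda_alg (n := ((n + 2 : ℕ) : F)) hne c1 hc
      rw [← ha, ← hs'] at hT
      have hu : x - X (n + 2) ≠ 0 := sub_ne_zero.mpr hne.symm
      have hDu : D (x - X (n + 2)) = 2 * y - 2 * ((n + 2 : ℕ) : F) * Y (n + 2) := by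
        rw [D.map_sub, hx, c2]
      have hDDu : D (D (x - X (n + 2))) = 2 * (3 * x ^ 2 + s) - 2 * ((n + 2 : ℕ) : F) ^ 2 * (3 * X (n + 2) ^ 2 + s) := by
        rw [hDu, D.map_sub, D2, hy, mul_assoc, D2, Dnat, c3]; ring
      have hq := hquot _ hu
      rw [hDDu] at hq
      have hrel := tauS_rel hy0 hX1 hXx (n + 1)
      have hn0 := hN n
      have hn1 := hN (n + 1)
      have hn2 := hN (n + 2)
      have hlog : D (tauS y x X (n + 3)) / tauS y x X (n + 3) =
          2 * (D (tauS y x X (n + 2)) / tauS y x X (n + 2)) + D (x - X (n + 2)) / (x - X (n + 2))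
           - D (tauS y x X (n + 1)) / tauS y x X (n + 1) := by
        have hd := congrArg D hrel
        simp only [D.leibniz, D.leibniz_pow, smul_eq_mul] at hd
        simp only [add_assoc, Nat.reduceAdd] at hd hrel hn0 hn1 hn2 ⊢
        generalize tauS y x X (n + 3) = a3 at *
        generalize tauS y x X (n + 2) = a2 at *
        generalize tauS y x X (n + 1) = a1 at *
        generalize x - X (n + 2) = u at *
        have h3 : a3 = a2 ^ 2 * u / a1 := by rw [← hrel, mul_div_cancel_right₀ _ hn0]
        have h4 : D a3 = (a2 ^ 2 * D u + u * (2 * a2 * D a2) - a3 * D a1) / a1 := by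
          rw [eq_div_iff hn0]
          simp at hd
          linear_combination hd
        rw [h4, h3]
        field_simp
        ring
      show D (D (tauS y x X (n + 3)) / tauS y x X (n + 3)) = _
      rw [hlog, D.map_sub, D.map_add, D2, ih1, ih0, hq, hDu]
      rw [mul_comm (x - X (n + 2)) (2 * (3 * x ^ 2 + s) - _), hT]
      rw [show n + 2 + 1 = n + 1 + 1 + 1 by ring, show n + 2 - 1 = n + 1 by omega]
      push_cast
      ring
  have := key n
  rw [hquot _ (hN n), div_eq_iff (pow_ne_zero 2 (hN n))] at this
  rw [this]; push_cast; ring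

end taueds

section transfer

lemma deriv_ext {R F : Type*} [CommRing R] [Algebra ℂ R] [Field F] [Algebra R F] [Algebra ℂ F]
    [IsScalarTower ℂ R F] [IsDomain R] [IsFractionRing R F] (d : Derivation ℂ R R) :
    ∃ D : Derivation ℤ F F, ∀ r, D (algebraMap R F r) = algebraMap R F (d r) := by
  let g : KaehlerDifferential ℂ R →ₗ[R] F := (Algebra.linearMap R F) ∘ₗ d.liftKaehlerDifferential
  have hloc : IsLocalizedModule (nonZeroDivisors R) (KaehlerDifferential.map ℂ ℂ R F) :=
    inferInstance
  have hu : ∀ x : nonZeroDivisors R, IsUnit ((algebraMap R (Module.End R F)) x) := by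
    intro x
    rw [Module.End.isUnit_iff]
    have hx : algebraMap R F x ≠ 0 := by
      simpa using nonZeroDivisors.ne_zero x.2
    constructor
    · intro a b h
      simp only [Module.algebraMap_end_apply, Algebra.smul_def] at h
      exact mul_left_cancel₀ hx h
    · intro b
      refine ⟨(algebraMap R F x)⁻¹ * b, ?_⟩
      simp only [Module.algebraMap_end_apply, Algebra.smul_def]
      field_simp
  let l := IsLocalizedModule.lift (nonZeroDivisors R) (KaehlerDifferential.map ℂ ℂ R F) g hu
  have hl : ∀ x, l (KaehlerDifferential.map ℂ ℂ R F x) = g x := fun x =>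
    IsLocalizedModule.lift_apply _ _ _ _ _
  let l' : KaehlerDifferential ℂ F →ₗ[F] F := l.extendScalarsOfIsLocalization (nonZeroDivisors R) F
  refine ⟨(l'.compDer (KaehlerDifferential.D ℂ F)).restrictScalars ℤ, fun r => ?_⟩
  have : l' (KaehlerDifferential.D ℂ F (algebraMap R F r)) = algebraMap R F (d r) := by
    change l _ = _
    rw [← KaehlerDifferential.map_D ℂ ℂ R F r, hl]
    simp [g]
  exact this

variable {F : Type*} [Field F]

/-- evaluation of a polynomial over `ℤ[s,t]` -/
noncomputable def phi (s t x : F) : (MvPolynomial (Fin 2) ℤ)[X] →+* F :=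
  Polynomial.eval₂RingHom (MvPolynomial.eval₂Hom (Int.castRingHom F) ![s, t]) x

lemma phi_C (s t x : F) (c) : phi s t x (C c) = MvPolynomial.eval₂Hom (Int.castRingHom F) ![s, t] c := by
  simp [phi]
lemma phi_X (s t x : F) : phi s t x X = x := by
  simp [phi]
lemma phi_s (s t x : F) : phi s t x (C (MvPolynomial.X 0)) = s := by
  simp [phi]
lemma phi_t (s t x : F) : phi s t x (C (MvPolynomial.X 1)) = t := by
  simp [phi]

lemma phi_D (D : Derivation ℤ F F) {s t x y : F} (hs : D s = 0) (ht : D t = 0) (hx : D x = 2 * y)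
    (P : (MvPolynomial (Fin 2) ℤ)[X]) : D (phi s t x P) = 2 * y * phi s t x (derivative P) := by
  have hC : ∀ c : MvPolynomial (Fin 2) ℤ, D (phi s t x (C c)) = 0 := by
    intro c
    rw [phi_C]
    induction c using MvPolynomial.induction_on with
    | C a => simp
    | add p q hp hq => rw [map_add, D.map_add, hp, hq, add_zero]
    | mul_X p i hp =>
      rw [map_mul, D.leibniz, hp]
      fin_cases i <;> simp [hs, ht]
  induction P using Polynomial.induction_on' with
  | add p q hp hq => rw [map_add, D.map_add, hp, hq, derivative_add, map_add]; ring
  | monomial n a =>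
    rw [← C_mul_X_pow_eq_monomial, map_mul, D.leibniz, hC, map_pow, phi_X, D.leibniz_pow, hx,
      derivative_C_mul_X_pow]
    simp only [map_mul, map_pow, phi_X, C_mul, smul_eq_mul, nsmul_eq_mul, mul_zero, add_zero]
    simp
    ring

lemma phi_preΨ {s t x y : F} (hc : y ^ 2 = x ^ 3 + s * x + t) (n : ℕ) :
    normEDS (2 * y) (3 * x ^ 4 + 6 * s * x ^ 2 + 12 * t * x - s ^ 2)
      (2 * x ^ 6 + 10 * s * x ^ 4 + 40 * t * x ^ 3 - 10 * s ^ 2 * x ^ 2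
      - 8 * s * t * x - 2 * s ^ 3 - 16 * t ^ 2) n =
    phi s t x ((Wst ℤ).preΨ' n) * if Even n then 2 * y else 1 := by
  rw [normEDS_ofNat, preΨ', map_preNormEDS']
  have h2 : phi s t x 2 = 2 := map_ofNat _ 2
  have h3 : phi s t x 3 = 3 := map_ofNat _ 3
  have h5 : phi s t x 5 = 5 := map_ofNat _ 5
  have h10 : phi s t x 10 = 10 := map_ofNat _ 10
  congr 2
  · simp only [Ψ₂Sq, b₂, b₄, b₆, Wst]
    simp [phi_C, phi_X]
    rw [show (2 * y) ^ 4 = (4 * y ^ 2) ^ 2 by ring, hc]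
    ring
  · simp only [Ψ₃, b₂, b₄, b₆, b₈, Wst]
    simp [phi_C, phi_X, h2, h3, h5, h10]
    ring
  · simp only [preΨ₄, b₂, b₄, b₆, b₈, Wst]
    simp [phi_C, phi_X, h2, h3, h5, h10]
    ring

lemma toda_phi [CharZero F] (D : Derivation ℤ F F) {s t x y : F} (hs : D s = 0) (ht : D t = 0)
    (hx : D x = 2 * y) (hy : D y = 3 * x ^ 2 + s) (hy0 : y ≠ 0) (hc : y ^ 2 = x ^ 3 + s * x + t)
    (n : ℕ) (hn : Odd n) :
    phi s t x ((Wst ℤ).preΨ' n * (4 * (X ^ 3 + C (MvPolynomial.X 0) * X + C (MvPolynomial.X 1)) *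
        derivative (derivative ((Wst ℤ).preΨ' n)) +
      2 * derivative (X ^ 3 + C (MvPolynomial.X 0) * X + C (MvPolynomial.X 1)) *
        derivative ((Wst ℤ).preΨ' n)) -
      4 * (X ^ 3 + C (MvPolynomial.X 0) * X + C (MvPolynomial.X 1)) *
        derivative ((Wst ℤ).preΨ' n) ^ 2 -
    (n : (MvPolynomial (Fin 2) ℤ)[X]) ^ 2 *
      (4 * (X ^ 3 + C (MvPolynomial.X 0) * X + C (MvPolynomial.X 1)) *
      (Wst ℤ).preΨ' (n + 1) * (Wst ℤ).preΨ' (n - 1))) = 0 := by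
  classical
  set f : (MvPolynomial (Fin 2) ℤ)[X] := X ^ 3 + C (MvPolynomial.X 0) * X + C (MvPolynomial.X 1) with hf
  obtain ⟨X', Y', hX1, hY1, hcur, hadd, hX2⟩ := pts_main D hs hx hy hy0 hc
  have hXx : ∀ n, 2 ≤ n → X' n ≠ x := fun n hn => hX1 ▸ (hadd n 1 le_rfl (by omega)).1
  obtain ⟨m, rfl⟩ : ∃ m, n = m + 1 := ⟨n - 1, by obtain ⟨k, hk⟩ := hn; omega⟩
  have hT := tauS_toda D hs hx hy hy0 hX1 hY1 hcur hadd hX2 m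
  have hR := tauS_rel hy0 hX1 hXx m
  have heq := fun n => (tauS_eq hy0 hX1 hY1 (fun n hn => (hcur n hn).1) hadd hX2 n).trans
    (phi_preΨ hc n)
  rw [show (m + 1 : F) ^ 2 * (x - X' (m + 1)) * tauS y x X' (m + 1) ^ 2 =
    (m + 1 : F) ^ 2 * (tauS y x X' (m + 1) ^ 2 * (x - X' (m + 1))) by ring, ← hR] at hT
  have ev1 : ¬ Even (m + 1) := Nat.not_even_iff_odd.mpr hn
  have ev0 : Even m := by by_contra h; exact ev1 (Nat.even_add_one.mpr h)
  have ev2 : Even (m + 2) := by simpa [Nat.even_add] using ev0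
  rw [heq, heq, heq, if_neg ev1, if_pos ev0, if_pos ev2, mul_one] at hT
  have hf1 : phi s t x f = y ^ 2 := by
    rw [hc]; simp [hf, phi_X, phi_C]
  have hf2 : phi s t x (derivative f) = 3 * x ^ 2 + s := by
    simp [hf, phi_X, phi_C]
    left; norm_num
  have hd1 := phi_D D hs ht hx ((Wst ℤ).preΨ' (m + 1))
  have hd2 : D (D (phi s t x ((Wst ℤ).preΨ' (m + 1)))) =
      4 * y ^ 2 * phi s t x (derivative (derivative ((Wst ℤ).preΨ' (m + 1)))) +
      2 * (3 * x ^ 2 + s) * phi s t x (derivative ((Wst ℤ).preΨ' (m + 1))) := by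
    rw [hd1, mul_assoc, two_mul, D.map_add, D.leibniz, hy, phi_D D hs ht hx, smul_eq_mul, smul_eq_mul]
    ring
  rw [hd2, hd1] at hT
  simp only [map_sub, map_mul, map_add, map_pow, hf1, hf2, map_ofNat, map_natCast, Nat.add_sub_cancel]
  push_cast
  linear_combination hT

theorem toda_poly (n : ℕ) (hn : Odd n) : ∃ f : (MvPolynomial (Fin 2) ℤ)[X],
    f = X ^ 3 + C (MvPolynomial.X 0) * X + C (MvPolynomial.X 1) ∧
    (Wst ℤ).preΨ' n * (4 * f * derivative (derivative ((Wst ℤ).preΨ' n)) +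
      2 * derivative f * derivative ((Wst ℤ).preΨ' n)) - 4 * f * derivative ((Wst ℤ).preΨ' n) ^ 2 =
    (n : (MvPolynomial (Fin 2) ℤ)[X]) ^ 2 * (4 * f * (Wst ℤ).preΨ' (n + 1) * (Wst ℤ).preΨ' (n - 1)) := by
  classical
  refine ⟨_, rfl, ?_⟩
  set f : (MvPolynomial (Fin 2) ℤ)[X] := X ^ 3 + C (MvPolynomial.X 0) * X + C (MvPolynomial.X 1) with hf
  rw [← sub_eq_zero]
  -- the generic point
  let R := MvPolynomial (Fin 3) ℂ
  let F := FractionRing R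
  let s : R := MvPolynomial.X 0
  let x : R := MvPolynomial.X 1
  let y : R := MvPolynomial.X 2
  let t : R := y ^ 2 - x ^ 3 - s * x
  let d : Derivation ℂ R R := MvPolynomial.mkDerivation ℂ ![0, 2 * y, 3 * x ^ 2 + s]
  have ds : d s = 0 := by
    change d (MvPolynomial.X 0) = _
    rw [MvPolynomial.mkDerivation_X]; rfl
  have dx : d x = 2 * y := by
    change d (MvPolynomial.X 1) = _
    rw [MvPolynomial.mkDerivation_X]; rfl
  have dy : d y = 3 * x ^ 2 + s := by
    change d (MvPolynomial.X 2) = _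
    rw [MvPolynomial.mkDerivation_X]; rfl
  obtain ⟨D, hD⟩ := deriv_ext (F := F) d
  have dt : d t = 0 := by
    simp only [t, d.map_sub, d.leibniz_pow, d.leibniz, ds, dx, dy, smul_eq_mul, nsmul_eq_mul]
    push_cast
    ring
  let ι := algebraMap R F
  have hy0 : ι y ≠ 0 := by
    have : y ≠ 0 := MvPolynomial.X_ne_zero _
    simpa [ι] using this
  have hDs : D (ι s) = 0 := by rw [hD, ds, map_zero]
  have hDt : D (ι t) = 0 := by rw [hD, dt, map_zero]
  have hDx : D (ι x) = 2 * ι y := by rw [hD, dx, map_mul, map_ofNat]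
  have hDy : D (ι y) = 3 * ι x ^ 2 + ι s := by
    rw [hD, dy, map_add, map_mul, map_pow, map_ofNat]
  have hc : ι y ^ 2 = ι x ^ 3 + ι s * ι x + ι t := by
    simp only [t, map_sub, map_pow, map_mul]; ring
  have hchar : CharZero F := charZero_of_injective_algebraMap (R := ℂ) (algebraMap ℂ F).injective
  -- injectivity
  have hinj : ∀ (P : (MvPolynomial (Fin 2) ℤ)[X]), phi (ι s) (ι t) (ι x) P = 0 → P = 0 := by
    intro P hP
    have hev : ∀ a b c : ℂ, phi a b c P = 0 := by
      intro a b c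
      obtain ⟨z, hz⟩ := IsAlgClosed.exists_pow_nat_eq (c ^ 3 + a * c + b) (n := 2) (by norm_num)
      let ψ : (MvPolynomial (Fin 2) ℤ)[X] →+* R :=
        Polynomial.eval₂RingHom (MvPolynomial.eval₂Hom (Int.castRingHom R) ![s, t]) x
      have h1 : ι.comp ψ = phi (ι s) (ι t) (ι x) := by
        apply Polynomial.ringHom_ext'
        · apply MvPolynomial.ringHom_ext
          · intro r; simp [ψ, phi]
          · intro i; fin_cases i <;> simp [ψ, phi]
        · simp [ψ, phi]
      have h2 : ψ P = 0 := by
        apply IsFractionRing.injective R F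
        rw [map_zero, ← hP, ← h1]; rfl
      have h3 : (MvPolynomial.eval ![a, c, z]).comp ψ = phi a b c := by
        apply Polynomial.ringHom_ext'
        · apply MvPolynomial.ringHom_ext
          · intro r; simp [ψ, phi]
          · intro i; fin_cases i
            · simp [ψ, phi, s]
            · simp [ψ, phi, s, t, x, y, hz]
              ring
        · simp [ψ, phi, x]
      rw [← h3, RingHom.comp_apply, h2, map_zero]
    ext1 k
    apply MvPolynomial.map_injective (Int.castRingHom ℂ) Int.cast_injective
    rw [coeff_zero, map_zero]
    apply MvPolynomial.funext
    intro v
    rw [map_zero]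
    have : P.map (MvPolynomial.eval₂Hom (Int.castRingHom ℂ) ![v 0, v 1]) = 0 := by
      apply Polynomial.funext
      intro c
      have := hev (v 0) (v 1) c
      simp only [phi, coe_eval₂RingHom] at this
      rw [eval_map, this, eval_zero]
    have h := congrArg (fun q => q.coeff k) this
    simp only [coeff_map, coeff_zero] at h
    rw [← h, MvPolynomial.eval_map]
    have : v = ![v 0, v 1] := by ext i; fin_cases i <;> rfl
    rw [← this]; rfl
  exact hinj _ (toda_phi D hDs hDt hDx hDy hy0 hc n hn)
end transfer

section coeffs

lemma odd_ne_zero_aux {F : Type*} [Field F] (d : F) (n : ℕ) (hn : Odd n) :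
    preNormEDS' (0 : F) (-1) d n ≠ 0 := by
  induction n using normEDSRec' with
  | zero => simp at hn
  | one => simp
  | two => exact absurd hn (by decide)
  | three => simp
  | four => exact absurd hn (by decide)
  | even m ih => exact absurd hn (by simp)
  | odd m ih =>
    rw [preNormEDS'_odd]
    by_cases hm : Even m
    · rw [if_pos hm, if_pos hm, mul_zero, zero_sub, mul_one, neg_ne_zero]
      refine mul_ne_zero (ih _ (by omega) ?_) (pow_ne_zero _ (ih _ (by omega) ?_)) <;>
        · obtain ⟨k, rfl⟩ := hm
          first | exact ⟨k, by omega⟩ | exact ⟨k + 1, by omega⟩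
    · rw [if_neg hm, if_neg hm, mul_zero, sub_zero, mul_one]
      obtain ⟨k, rfl⟩ := Nat.not_even_iff_odd.mp hm
      exact mul_ne_zero (ih _ (by omega) ⟨k + 2, by ring⟩)
        (pow_ne_zero _ (ih _ (by omega) ⟨k + 1, by ring⟩))

variable (p : ℕ) [Fact p.Prime]

/-- reduction modulo `p` on coefficients -/
noncomputable abbrev red : MvPolynomial (Fin 2) ℤ →+* MvPolynomial (Fin 2) (ZMod p) :=
  MvPolynomial.map (Int.castRingHom (ZMod p))

variable {p}

lemma red_eq_zero {c : MvPolynomial (Fin 2) ℤ} (h : red p c = 0) : ∃ G, c = (p : MvPolynomial (Fin 2) ℤ) * G := by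
  obtain ⟨G, hG⟩ := (MvPolynomial.C_dvd_iff_zmod p c).mpr h
  exact ⟨G, by rw [hG]; simp⟩

lemma red_map_eq_zero {c : (MvPolynomial (Fin 2) ℤ)[X]} (h : c.map (red p) = 0) :
    ∃ G, c = (p : (MvPolynomial (Fin 2) ℤ)[X]) * G := by
  have : C (p : MvPolynomial (Fin 2) ℤ) ∣ c := by
    rw [C_dvd_iff_dvd_coeff]
    intro i
    have h' := congrArg (fun q => q.coeff i) h
    simp only [coeff_map, coeff_zero] at h'
    obtain ⟨G, hG⟩ := red_eq_zero h'
    exact ⟨G, hG⟩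
  obtain ⟨G, hG⟩ := this
  exact ⟨G, by rw [hG]; simp⟩

lemma psi_ne_zero (hp2 : Odd p) : ((Wst ℤ).preΨ' p).map (red p) ≠ 0 := by
  intro h
  obtain ⟨G, hG⟩ := red_map_eq_zero h
  have h1 := phi_preΨ (F := ZMod p) (s := 1) (t := 0) (x := 0) (y := 0) (by ring) p
  rw [normEDS_ofNat, hG, if_neg (Nat.not_even_iff_odd.mpr hp2)] at h1
  simp only [map_mul, map_natCast, CharP.cast_eq_zero, zero_mul, mul_one] at h1
  rw [show ((2 : ZMod p) * 0) ^ 4 = 0 by ring,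
    show (3 : ZMod p) * 0 ^ 4 + 6 * 0 ^ 2 + 12 * 0 * 0 - 1 ^ 2 = -1 by ring] at h1
  exact odd_ne_zero_aux _ p hp2 h1

lemma cancel_p (hp0 : p ≠ 0) {a b : MvPolynomial (Fin 2) ℤ} (h : (p : MvPolynomial (Fin 2) ℤ) * a = p * b) : a = b :=
  mul_left_cancel₀ (Nat.cast_ne_zero.mpr hp0) h

theorem ode_mod (hp2 : Odd p)
    (θ : Polynomial (MvPolynomial (Fin 2) (ZMod p)))
    (hθ : θ.comp (Polynomial.X ^ p) = ((Wst ℤ).preΨ' p).map (red p)) :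
    ∃ M : (MvPolynomial (Fin 2) ℤ)[X],
      4 * (X ^ 3 + C (MvPolynomial.X 0) * X + C (MvPolynomial.X 1)) *
        derivative (derivative ((Wst ℤ).preΨ' p)) +
      2 * (3 * X ^ 2 + C (MvPolynomial.X 0)) * derivative ((Wst ℤ).preΨ' p) =
      (p : (MvPolynomial (Fin 2) ℤ)[X]) ^ 2 * M := by
  obtain ⟨f, hf, hT⟩ := toda_poly p hp2
  have hf' : derivative f = 3 * X ^ 2 + C (MvPolynomial.X 0) := by
    rw [hf]; simp
    change (C 2 : (MvPolynomial (Fin 2) ℤ)[X]) + C 1 = C 3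
    rw [← C_add]; norm_num
  rw [← hf, ← hf']
  have hne := psi_ne_zero hp2
  set ψ := (Wst ℤ).preΨ' p
  have hpz : (p : (MvPolynomial (Fin 2) (ZMod p))[X]) = 0 := CharP.cast_eq_zero _ _
  have hp0 : (p : (MvPolynomial (Fin 2) ℤ)[X]) ≠ 0 := Nat.cast_ne_zero.mpr (Fact.out : p.Prime).ne_zero
  have hd : (derivative ψ).map (red p) = 0 := by
    rw [← derivative_map, ← hθ, ← expand_eq_comp_X_pow, derivative_expand, hpz]
    simp
  obtain ⟨G, hG⟩ := red_map_eq_zero hd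
  set M := 4 * f * derivative (derivative ψ) + 2 * derivative f * derivative ψ with hM
  have h1 : ψ * M = (p : (MvPolynomial (Fin 2) ℤ)[X]) ^ 2 * (4 * f * G ^ 2 + 4 * f * (Wst ℤ).preΨ' (p + 1) * (Wst ℤ).preΨ' (p - 1)) := by
    have h3 : (derivative ψ) ^ 2 = (p * G) ^ 2 := by rw [hG]
    linear_combination hT + 4 * f * h3
  have key : ∀ A B : (MvPolynomial (Fin 2) ℤ)[X], ψ * A = p * B → ∃ A', A = p * A' := by
    intro A B h
    have h2 := congrArg (Polynomial.map (red p)) h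
    rw [Polynomial.map_mul, Polynomial.map_mul, Polynomial.map_natCast, hpz, zero_mul] at h2
    exact red_map_eq_zero ((mul_eq_zero.mp h2).resolve_left hne)
  obtain ⟨M1, hM1⟩ := key M _ (h1.trans (by rw [pow_two, mul_assoc]))
  rw [hM1] at h1
  obtain ⟨M2, hM2⟩ := key M1 (4 * f * G ^ 2 + 4 * f * (Wst ℤ).preΨ' (p + 1) * (Wst ℤ).preΨ' (p - 1))
    (mul_left_cancel₀ hp0 (by linear_combination h1))
  exact ⟨M2, by rw [hM1, hM2]; ring⟩

lemma coeff_rel {R : Type*} [CommRing R] (s t : R) (P M : R[X]) (q : R)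
    (h : 4 * (X ^ 3 + C s * X + C t) * derivative (derivative P) +
      2 * (3 * X ^ 2 + C s) * derivative P = C q * M) (k : ℕ) (hk : 2 ≤ k) :
    2 * k * (2 * k + 1) * P.coeff k + s * ((2 * k + 4) * (2 * k + 3)) * P.coeff (k + 2)
      + t * ((2 * k + 6) * (2 * k + 4)) * P.coeff (k + 3) = q * M.coeff (k + 1) := by
  obtain ⟨k, rfl⟩ : ∃ m, k = m + 2 := ⟨k - 2, by omega⟩
  have h' : X ^ 3 * (C 4 * derivative (derivative P)) + X * (C (4 * s) * derivative (derivative P)) +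
      C (4 * t) * derivative (derivative P) + X ^ 2 * (C 6 * derivative P) + C (2 * s) * derivative P
       = C q * M := by
    rw [← h]
    simp only [C_mul]
    have e4 : (C 4 : R[X]) = 4 := rfl
    have e6 : (C 6 : R[X]) = 6 := rfl
    have e2 : (C 2 : R[X]) = 2 := rfl
    rw [e4, e6, e2]
    ring
  have hc := congrArg (fun q => q.coeff (k + 3)) h'
  simp only [coeff_add, coeff_C_mul] at hc
  rw [show k + 3 = (k + 2) + 1 by ring, coeff_X_mul, show k + 2 + 1 = k + 3 by ring, coeff_X_pow_mul,
    show k + 3 = k + 1 + 2 by ring, coeff_X_pow_mul] at hc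
  simp only [coeff_C_mul, coeff_derivative] at hc
  simp only [add_assoc, Nat.reduceAdd] at hc ⊢
  rw [← hc]
  push_cast
  ring

lemma U_rel {R : Type*} [CommRing R] (s t : R) (h : ℕ) (hh : (2 * h + 1 : R) = 0) (e : ℕ) :
    (2 * e + 2) * (X ^ 3 * (1 + C s * X ^ 2 + C t * X ^ 3) ^ h : R[X]).coeff (e + 4) +
    s * (2 * e) * (X ^ 3 * (1 + C s * X ^ 2 + C t * X ^ 3) ^ h : R[X]).coeff (e + 2) +
    t * (2 * e - 1) * (X ^ 3 * (1 + C s * X ^ 2 + C t * X ^ 3) ^ h : R[X]).coeff (e + 1) = 0 := by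
  set g : R[X] := 1 + C s * X ^ 2 + C t * X ^ 3 with hg
  set U := X ^ 3 * g ^ h with hU
  have hg' : derivative g = C (2 * s) * X + C (3 * t) * X ^ 2 := by
    rw [hg]; simp only [derivative_add, derivative_one, derivative_C_mul_X_pow]
    simp; ring
  have hh' : (2 * (h : R[X]) + 1) = 0 := by
    have := congrArg (C : R → R[X]) hh
    have e2 : (C 2 : R[X]) = 2 := rfl
    simpa [e2] using this
  have hode : C 2 * (g * (X * derivative U)) + (X * derivative g - C 6 * g) * U = 0 := by
    rw [hU]
    have e6 : (C 6 : R[X]) = 6 := rfl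
    have e2 : (C 2 : R[X]) = 2 := rfl
    rw [e6, e2, derivative_mul, derivative_X_pow]
    have : g * derivative (g ^ h) = h * g ^ h * derivative g := by
      rcases h with _ | h
      · simp
      · rw [derivative_pow]; simp; ring
    have e3 : (C (3 : R) : R[X]) = 3 := rfl
    simp [e3]
    linear_combination 2 * X ^ 4 * this + X ^ 4 * g ^ h * derivative g * hh'
  set V := X * derivative U with hV
  have hVc : ∀ j, V.coeff j = j * U.coeff j := by
    intro j
    cases j with
    | zero => simp [hV]
    | succ j => rw [hV, coeff_X_mul, coeff_derivative]; push_cast; ring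
  have h2 : C 2 * V + X ^ 2 * (C (2 * s) * V) + X ^ 3 * (C (2 * t) * V) - C 6 * U
      - X ^ 2 * (C (4 * s) * U) - X ^ 3 * (C (3 * t) * U) = 0 := by
    rw [← hode, hg', hg]
    have e6 : (C 6 : R[X]) = 6 := rfl
    have e2 : (C 2 : R[X]) = 2 := rfl
    have e4 : (C 4 : R[X]) = 4 := rfl
    have e3 : (C 3 : R[X]) = 3 := rfl
    simp only [C_mul, e6, e2, e4, e3]
    ring
  clear_value V U
  have hc := congrArg (fun q => q.coeff (e + 4)) h2
  simp only [coeff_add, coeff_sub, coeff_C_mul, coeff_zero] at hc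
  have x2 : ∀ P : R[X], (X ^ 2 * P).coeff (e + 4) = P.coeff (e + 2) := fun P =>
    coeff_X_pow_mul P 2 (e + 2)
  have x3 : ∀ P : R[X], (X ^ 3 * P).coeff (e + 4) = P.coeff (e + 1) := fun P =>
    coeff_X_pow_mul P 3 (e + 1)
  rw [x2, x2, x3, x3] at hc
  simp only [coeff_C_mul, hVc] at hc
  rw [← hc]
  push_cast
  ring

end coeffs

section hasse

theorem theta_coeff_eq (p h : ℕ) [hp : Fact p.Prime] (hph : p = 2 * h + 1) (hh : 2 ≤ h)
    (θ : Polynomial (MvPolynomial (Fin 2) (ZMod p)))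
    (hθ : θ.comp (Polynomial.X ^ p) = ((Wst ℤ).preΨ' p).map (red p)) :
    θ.coeff h = ((1 + C (MvPolynomial.X 0) * X ^ 2 + C (MvPolynomial.X 1) * X ^ 3) ^ h :
      (MvPolynomial (Fin 2) (ZMod p))[X]).coeff h := by
  have hp2 : Odd p := ⟨h, hph⟩
  have hpe : ¬ Even p := Nat.not_even_iff_odd.mpr hp2
  have hp0 : p ≠ 0 := hp.out.ne_zero
  obtain ⟨M, hM⟩ := ode_mod hp2 θ hθ
  obtain ⟨N, hN⟩ : ∃ N, N = p * h + h := ⟨_, rfl⟩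
  have hN2 : 2 * N + 1 = p ^ 2 := by rw [hN, hph]; ring
  have hdeg : ((Wst ℤ).preΨ' p).natDegree ≤ N := by
    have := (Wst ℤ).natDegree_preΨ'_le p
    rw [if_neg hpe] at this
    omega
  have hlead : ((Wst ℤ).preΨ' p).coeff N = p := by
    have := (Wst ℤ).coeff_preΨ' p
    rw [if_neg hpe, if_neg hpe, show (p ^ 2 - 1) / 2 = N by omega] at this
    exact this
  have hA : θ.coeff h = red p (((Wst ℤ).preΨ' p).coeff (p * h)) := by
    rw [← coeff_map, ← hθ, ← expand_eq_comp_X_pow, coeff_expand_mul' hp.out.pos]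
  set ψ := (Wst ℤ).preΨ' p
  have hM' := coeff_rel (MvPolynomial.X 0) (MvPolynomial.X 1) ψ M ((p : MvPolynomial (Fin 2) ℤ) ^ 2)
    (by rw [hM]; simp)
  have hhR : (2 * (h : MvPolynomial (Fin 2) (ZMod p)) + 1) = 0 := by
    have : ((2 * h + 1 : ℕ) : MvPolynomial (Fin 2) (ZMod p)) = 0 := by
      rw [← hph]; exact CharP.cast_eq_zero _ _
    push_cast at this; exact this
  have hU := U_rel (MvPolynomial.X 0 : MvPolynomial (Fin 2) (ZMod p)) (MvPolynomial.X 1) h hhR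
  set T := (1 + C (MvPolynomial.X 0) * X ^ 2 + C (MvPolynomial.X 1) * X ^ 3 :
      (MvPolynomial (Fin 2) (ZMod p))[X]) ^ h with hT
  have hT0 : T.coeff 0 = 1 := by
    rw [hT, coeff_zero_eq_eval_zero]; simp
  set U := X ^ 3 * T with hUdef
  have hUc : ∀ j, U.coeff (j + 3) = T.coeff j := fun j => coeff_X_pow_mul T 3 j
  have hU0 : ∀ j < 3, U.coeff j = 0 := by
    intro j hj
    rw [hUdef, coeff_X_pow_mul', if_neg (by omega)]
  clear_value U T
  have hpz : (p : MvPolynomial (Fin 2) (ZMod p)) = 0 := CharP.cast_eq_zero _ _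
  have hnz : ∀ m : ℕ, 0 < m → m < p → (m : MvPolynomial (Fin 2) (ZMod p)) ≠ 0 := by
    intro m h0 h1 h2
    have := (CharP.cast_eq_zero_iff (MvPolynomial (Fin 2) (ZMod p)) p m).mp h2
    exact absurd (Nat.le_of_dvd h0 this) (by omega)
  -- relation in terms of `e`
  have hrel : ∀ e k : ℕ, k + e + 1 = N → 2 ≤ k → ∃ m : MvPolynomial (Fin 2) ℤ,
      (2 * e + 3) * (2 * e + 2) * ψ.coeff k
      + (MvPolynomial.X 0 : MvPolynomial (Fin 2) ℤ) * ((2 * e - 1) * (2 * e)) * ψ.coeff (k + 2)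
      + (MvPolynomial.X 1 : MvPolynomial (Fin 2) ℤ) * ((2 * e - 3) * (2 * e - 1)) * ψ.coeff (k + 3) = p ^ 2 * m := by
    intro e k hk h2k
    have h1 := hM' k h2k
    have h2 : (2 * (k : MvPolynomial (Fin 2) ℤ)) = p ^ 2 - (2 * e + 3) := by
      have : ((2 * (k + e + 1) + 1 : ℕ) : MvPolynomial (Fin 2) ℤ) = ((p ^ 2 : ℕ) : MvPolynomial (Fin 2) ℤ) := by
        rw [hk, hN2]
      push_cast at this
      linear_combination this
    rw [h2] at h1
    refine ⟨M.coeff (k + 1) - ((p ^ 2 - (4 * e + 5)) * ψ.coeff k +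
      (MvPolynomial.X 0 : MvPolynomial (Fin 2) ℤ) * (p ^ 2 + (1 - 4 * e)) * ψ.coeff (k + 2) +
      (MvPolynomial.X 1 : MvPolynomial (Fin 2) ℤ) * (p ^ 2 + (4 - 4 * e)) * ψ.coeff (k + 3)), ?_⟩
    linear_combination h1
  have step : ∀ e k : ℕ, k + e + 1 = N → 2 ≤ k → ∀ G2 G3 : MvPolynomial (Fin 2) ℤ,
      ψ.coeff (k + 2) = p * G2 → ψ.coeff (k + 3) = p * G3 →
      ∃ m : MvPolynomial (Fin 2) ℤ, (2 * e + 3) * (2 * e + 2) * ψ.coeff k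
      + p * ((MvPolynomial.X 0 : MvPolynomial (Fin 2) ℤ) * (2 * e) * ((2 * e - 1) * G2)
      + (MvPolynomial.X 1 : MvPolynomial (Fin 2) ℤ) * (2 * e - 1) * ((2 * e - 3) * G3) - p * m) = 0 := by
    intro e k hk h2k G2 G3 h2 h3
    obtain ⟨m, hm⟩ := hrel e k hk h2k
    rw [h2, h3] at hm
    exact ⟨m, by linear_combination hm⟩
  have hNbig : 5 * h ≤ p * h := Nat.mul_le_mul_right _ (by omega)
  have main : ∀ j : ℕ, j < h + 3 → ∃ G : MvPolynomial (Fin 2) ℤ, ψ.coeff (N + 3 - j) = p * G ∧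
      (2 * j - 5) * red p G = U.coeff j := by
    intro j
    induction j using Nat.strong_induction_on with
    | _ j ih =>
    intro hj
    by_cases hj3 : j < 3
    · refine ⟨0, ?_, ?_⟩
      · rw [mul_zero]; exact coeff_eq_zero_of_natDegree_lt (by omega)
      · rw [hU0 j hj3]; simp
    by_cases hj4 : j = 3
    · refine ⟨1, ?_, ?_⟩
      · rw [hj4, mul_one]; exact hlead
      · have h3 := hUc 0
        rw [hT0] at h3
        rw [hj4, h3, map_one]; push_cast; ring
    obtain ⟨e, rfl⟩ : ∃ e, j = e + 4 := ⟨j - 4, by omega⟩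
    obtain ⟨G2, hG2, hG2'⟩ := ih (e + 2) (by omega) (by omega)
    obtain ⟨G3, hG3, hG3'⟩ := ih (e + 1) (by omega) (by omega)
    obtain ⟨k, hk⟩ : ∃ k, k + e + 1 = N := ⟨N - (e + 1), by omega⟩
    rw [show N + 3 - (e + 2) = k + 2 by omega] at hG2
    rw [show N + 3 - (e + 1) = k + 3 by omega] at hG3
    rw [show N + 3 - (e + 4) = k by omega]
    obtain ⟨m, hm⟩ := step e k hk (by omega) G2 G3 hG2 hG3
    have hn1 := hnz (2 * e + 3) (by omega) (by omega)
    have hn2 := hnz (2 * e + 2) (by omega) (by omega)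
    push_cast at hn1 hn2
    have hr := congrArg (red p) hm
    simp only [map_add, map_mul, map_natCast, hpz, zero_mul, add_zero, map_zero, map_ofNat] at hr
    obtain ⟨G, hG⟩ := red_eq_zero ((mul_eq_zero.mp hr).resolve_left (mul_ne_zero hn1 hn2))
    refine ⟨G, hG, ?_⟩
    rw [hG] at hm
    have hm2 : (p : MvPolynomial (Fin 2) ℤ) * ((2 * e + 3) * (2 * e + 2) * G
      + ((MvPolynomial.X 0 : MvPolynomial (Fin 2) ℤ) * (2 * e) * ((2 * e - 1) * G2)
      + (MvPolynomial.X 1 : MvPolynomial (Fin 2) ℤ) * (2 * e - 1) * ((2 * e - 3) * G3) - p * m)) = p * 0 := by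
      linear_combination hm
    have hr2 := congrArg (red p) (cancel_p hp0 hm2)
    simp only [map_add, map_sub, map_mul, map_natCast, hpz, zero_mul, sub_zero, map_zero, map_ofNat, map_one,
      MvPolynomial.map_X] at hr2
    have hUe := hU e
    push_cast at hG2' hG3'
    apply mul_left_cancel₀ hn2
    push_cast
    linear_combination hr2 - hUe - (MvPolynomial.X 0 : MvPolynomial (Fin 2) (ZMod p)) * (2 * e) * hG2' - (MvPolynomial.X 1 : MvPolynomial (Fin 2) (ZMod p)) * (2 * e - 1) * hG3'
  obtain ⟨e, rfl⟩ : ∃ e, h = e + 1 := ⟨h - 1, by omega⟩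
  obtain ⟨G2, hG2, hG2'⟩ := main (e + 2) (by omega)
  obtain ⟨G3, hG3, hG3'⟩ := main (e + 1) (by omega)
  obtain ⟨k, hk⟩ : ∃ k, k = p * (e + 1) := ⟨_, rfl⟩
  rw [show N + 3 - (e + 2) = k + 2 by omega] at hG2
  rw [show N + 3 - (e + 1) = k + 3 by omega] at hG3
  obtain ⟨m, hm⟩ := step e k (by omega) (by omega) G2 G3 hG2 hG3
  have hn2 := hnz (2 * e + 2) (by omega) (by omega)
  push_cast at hn2
  have hpe3 : (p : MvPolynomial (Fin 2) ℤ) = 2 * e + 3 := by rw [hph]; push_cast; ring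
  have hm2 : (p : MvPolynomial (Fin 2) ℤ) * ((2 * e + 2) * ψ.coeff k
      + ((MvPolynomial.X 0 : MvPolynomial (Fin 2) ℤ) * (2 * e) * ((2 * e - 1) * G2)
      + (MvPolynomial.X 1 : MvPolynomial (Fin 2) ℤ) * (2 * e - 1) * ((2 * e - 3) * G3) - p * m)) = p * 0 := by
    linear_combination hm + (2 * e + 2) * ψ.coeff k * hpe3
  have hr2 := congrArg (red p) (cancel_p hp0 hm2)
  simp only [map_add, map_sub, map_mul, map_natCast, hpz, zero_mul, sub_zero, map_zero, map_ofNat, map_one,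
      MvPolynomial.map_X] at hr2
  have hUe := hU e
  push_cast at hG2' hG3'
  rw [hA, ← hk]
  apply mul_left_cancel₀ hn2
  rw [← hUc (e + 1)]
  linear_combination hr2 - hUe - (MvPolynomial.X 0 : MvPolynomial (Fin 2) (ZMod p)) * (2 * e) * hG2' - (MvPolynomial.X 1 : MvPolynomial (Fin 2) (ZMod p)) * (2 * e - 1) * hG3'

end hasse

section diffeq

lemma exists_mapCoeffs {R : Type*} [CommRing R] (L : Derivation ℤ R R) :
    ∃ D : Derivation ℤ R[X] R[X], (∀ f i, (D f).coeff i = L (f.coeff i)) ∧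
      (∀ a, D (C a) = C (L a)) ∧ D X = 0 := by
  letI : Differential R := ⟨L⟩
  exact ⟨Differential.mapCoeffs, fun f i => rfl, fun a => Differential.mapCoeffs_C a,
    Differential.mapCoeffs_X⟩

lemma deriv_g {R : Type*} [CommRing R] (s t : R) :
    derivative (1 + C s * X ^ 2 + C t * X ^ 3 : R[X]) = 2 * C s * X + 3 * C t * X ^ 2 := by
  have e2 : (C 2 : R[X]) = 2 := rfl
  have e3 : (C 3 : R[X]) = 3 := rfl
  simp only [derivative_add, derivative_one, derivative_C_mul_X_pow]
  push_cast
  simp only [C_mul, e2, e3]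
  ring

lemma euler_A {R : Type*} [CommRing R] (L : Derivation ℤ R R) (s t : R) (hs : L s = 2 * s)
    (ht : L t = 3 * t) (n : ℕ) :
    L (((1 + C s * X ^ 2 + C t * X ^ 3 : R[X]) ^ n).coeff n) =
      n * ((1 + C s * X ^ 2 + C t * X ^ 3 : R[X]) ^ n).coeff n := by
  obtain ⟨D, hD, hC, hX⟩ := exists_mapCoeffs L
  have e2 : (C 2 : R[X]) = 2 := rfl
  have e3 : (C 3 : R[X]) = 3 := rfl
  have hg' := deriv_g s t
  have hDg : D (1 + C s * X ^ 2 + C t * X ^ 3) = X * derivative (1 + C s * X ^ 2 + C t * X ^ 3) := by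
    rw [hg']
    simp only [map_add, D.leibniz, D.leibniz_pow, hC, hX, hs, ht, D.map_one_eq_zero, smul_eq_mul, C_mul,
      e2, e3, smul_zero, mul_zero, zero_add]
    ring
  set g := (1 + C s * X ^ 2 + C t * X ^ 3 : R[X])
  have hDgn : D (g ^ n) = X * derivative (g ^ n) := by
    rw [D.leibniz_pow, hDg, derivative_pow, C_eq_natCast]
    simp only [nsmul_eq_mul, smul_eq_mul]
    ring
  rw [← hD, hDgn]
  cases n with
  | zero => simp
  | succ n => rw [coeff_X_mul, coeff_derivative]; push_cast; ring

lemma picard_fuchs {R : Type*} [CommRing R] (L : Derivation ℤ R R) (s t : R) (hs : L s = 9 * t)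
    (ht : L t = -2 * s ^ 2) (h : ℕ) (hh : 2 ≤ h) (h0 : (2 * h + 1 : R) = 0) :
    4 * L (L (((1 + C s * X ^ 2 + C t * X ^ 3 : R[X]) ^ h).coeff h)) =
      3 * s * ((1 + C s * X ^ 2 + C t * X ^ 3 : R[X]) ^ h).coeff h := by
  obtain ⟨D, hD, hC, hX⟩ := exists_mapCoeffs L
  obtain ⟨n, rfl⟩ : ∃ n, h = n + 2 := ⟨h - 2, by omega⟩
  have e2 : (C 2 : R[X]) = 2 := rfl
  have e3 : (C 3 : R[X]) = 3 := rfl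
  have e4 : (C 4 : R[X]) = 4 := rfl
  have e9 : (C 9 : R[X]) = 9 := rfl
  have e27 : (C 27 : R[X]) = 27 := rfl
  have hg' := deriv_g s t
  have hDs : D (C s) = 9 * C t := by rw [hC, hs, C_mul, e9]
  have hDt : D (C t) = -2 * C s ^ 2 := by rw [hC, ht, C_mul, C_pow, C_neg, e2]
  have h9 : D (9 : R[X]) = 0 := by simpa using D.map_natCast 9
  have h2 : D (2 : R[X]) = 0 := by simpa using D.map_natCast 2
  have hn0 : (2 * (n : R[X]) + 5) = 0 := by
    have := congrArg (C : R → R[X]) h0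
    push_cast at this
    simp only [C_add, C_mul, e2, C_eq_natCast, C_1, C_0] at this
    linear_combination this
  obtain ⟨S, hS⟩ : ∃ S : R[X], S = C s := ⟨_, rfl⟩
  obtain ⟨T, hT⟩ : ∃ T : R[X], T = C t := ⟨_, rfl⟩
  rw [← hS] at hg' hDs hDt
  rw [← hT] at hg' hDs hDt
  rw [← hS, ← hT]
  obtain ⟨g, hg⟩ : ∃ g : R[X], g = 1 + S * X ^ 2 + T * X ^ 3 := ⟨_, rfl⟩
  rw [← hg] at hg' ⊢
  have hDg : D g = 9 * T * X ^ 2 - 2 * S ^ 2 * X ^ 3 := by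
    rw [hg]
    simp only [map_add, D.leibniz, D.leibniz_pow, hDs, hDt, hX, D.map_one_eq_zero, smul_eq_mul,
      smul_zero, mul_zero, zero_add]
    ring
  have hDDg : D (D g) = -18 * S ^ 2 * X ^ 2 - 36 * S * T * X ^ 3 := by
    rw [hDg]
    simp only [map_sub, D.leibniz, D.leibniz_pow, hDs, hDt, hX, h9, h2, smul_eq_mul,
      smul_zero, mul_zero, zero_add, add_zero, nsmul_eq_mul]
    push_cast
    ring
  have hDD : D (D (g ^ (n + 2))) = (n + 2) * ((n + 1) * g ^ n * D g ^ 2 + g ^ (n + 1) * D (D g)) := by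
    rw [D.leibniz_pow, map_nsmul]
    simp only [D.leibniz, D.leibniz_pow, smul_eq_mul, nsmul_eq_mul]
    simp only [show n + 2 - 1 = n + 1 from rfl, Nat.add_sub_cancel]
    push_cast
    ring
  obtain ⟨r, hr⟩ : ∃ r : R[X], r = -3 * S + 3 * S ^ 2 * X ^ 2 + 6 * S * T * X ^ 3 +
    (4 * S ^ 3 + 27 * T ^ 2) * X ^ 4 := ⟨_, rfl⟩
  have hr' : derivative r = 6 * S ^ 2 * X + 18 * S * T * X ^ 2 +
    4 * (4 * S ^ 3 + 27 * T ^ 2) * X ^ 3 := by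
    rw [hr, hS, hT]
    simp only [derivative_add, derivative_mul, derivative_neg, derivative_C, derivative_X_pow, derivative_X,
      derivative_pow, derivative_ofNat, C_eq_natCast]
    push_cast
    ring
  have key : 4 * D (D (g ^ (n + 2))) - 3 * S * g ^ (n + 2) =
      2 * (X * derivative (r * g ^ (n + 1))) + r * g ^ (n + 1) := by
    rw [hDD, hDDg, hDg, derivative_mul, derivative_pow, hr', hg', C_eq_natCast, Nat.add_sub_cancel,
      pow_succ g (n + 1), pow_succ g n, hr]
    push_cast
    generalize g ^ n = G
    rw [hg]
    linear_combination (G * ((2 * n + 1) * (9 * T * X ^ 2 - 2 * S ^ 2 * X ^ 3) ^ 2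
      + 2 * (1 + S * X ^ 2 + T * X ^ 3) * (-18 * S ^ 2 * X ^ 2 - 36 * S * T * X ^ 3)
      - X * (-3 * S + 3 * S ^ 2 * X ^ 2 + 6 * S * T * X ^ 3 +
        (4 * S ^ 3 + 27 * T ^ 2) * X ^ 4) * (2 * S * X + 3 * T * X ^ 2))) * hn0
  have hc := congrArg (fun q => q.coeff (n + 2)) key
  have e1 : (4 * D (D (g ^ (n + 2)))).coeff (n + 2) = 4 * L (L ((g ^ (n + 2)).coeff (n + 2))) := by
    rw [← e4, coeff_C_mul, hD, hD]
  have e5 : (3 * S * g ^ (n + 2)).coeff (n + 2) = 3 * s * (g ^ (n + 2)).coeff (n + 2) := by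
    rw [hS, ← e3, ← C_mul, coeff_C_mul]
  have e6 : (2 * (X * derivative (r * g ^ (n + 1)))).coeff (n + 2) =
      2 * ((r * g ^ (n + 1)).coeff (n + 2) * (n + 2)) := by
    rw [← e2, coeff_C_mul, coeff_X_mul, coeff_derivative]; push_cast; ring
  simp only [coeff_sub, coeff_add] at hc
  rw [e1, e5, e6] at hc
  push_cast at h0
  linear_combination hc + (r * g ^ (n + 1)).coeff (n + 2) * h0

end diffeq

section special

lemma special_coeff {F : Type*} [Field F] (p h : ℕ) [Fact p.Prime] [CharP F p] (hph : p = 2 * h + 1)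
    (u : F) : ((1 + C (-3 * u ^ 2) * X ^ 2 + C (2 * u ^ 3) * X ^ 3 : F[X]) ^ h).coeff h
      = 3 ^ h * u ^ h := by
  have hgeo : (X - 1 : F[X]) ^ (2 * h) = ∑ i ∈ Finset.range p, X ^ i := by
    have h1 : (X - 1 : F[X]) ≠ 0 := by simpa using X_sub_C_ne_zero (1 : F)
    apply mul_right_cancel₀ h1
    rw [geom_sum_mul, ← pow_succ, ← hph, sub_pow_char, one_pow]
  have e2 : (C 2 : F[X]) = 2 := rfl
  have e3 : (C 3 : F[X]) = 3 := rfl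
  have hcomp : (1 + C (-3 * u ^ 2) * X ^ 2 + C (2 * u ^ 3) * X ^ 3 : F[X]) ^ h =
      ((∑ i ∈ Finset.range p, X ^ i) * (1 + 2 * X) ^ h : F[X]).comp (C u * X) := by
    rw [← hgeo, pow_mul, ← mul_pow, pow_comp]
    congr 1
    simp only [mul_comp, pow_comp, sub_comp, X_comp, one_comp, add_comp, ofNat_comp, C_mul, C_neg, C_pow, e2, e3]
    ring
  rw [hcomp, comp_C_mul_X_coeff, coeff_mul]
  congr 1
  have hd : ((1 + 2 * X : F[X]) ^ h).natDegree < h + 1 := by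
    have : (1 + 2 * X : F[X]).natDegree ≤ 1 := by compute_degree
    have := natDegree_pow_le_of_le h this
    omega
  have hev := eval_eq_sum_range' hd (1 : F)
  simp only [eval_pow, eval_add, eval_one, eval_mul, eval_ofNat, eval_X, one_pow, mul_one] at hev
  rw [show (1 + 2 : F) = 3 by norm_num] at hev
  rw [hev, Finset.Nat.antidiagonal_eq_map', Finset.sum_map]
  apply Finset.sum_congr rfl
  intro i hi
  have : h - i < p := by omega
  change (∑ i ∈ Finset.range p, X ^ i : F[X]).coeff (h - i) * ((1 + 2 * X : F[X]) ^ h).coeff i = _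
  simp [coeff_X_pow, this]

end special

section squarefree

/-- The polynomial `[w^h] (1 + s w² + t w³)^h` in `K[s,t]`. -/
noncomputable def hasseA (K : Type*) [Field K] (h : ℕ) : MvPolynomial (Fin 2) K :=
  ((1 + C (MvPolynomial.X 0) * X ^ 2 + C (MvPolynomial.X 1) * X ^ 3 :
    (MvPolynomial (Fin 2) K)[X]) ^ h).coeff h

lemma hasseA_map {K F : Type*} [Field K] [CommRing F] (φ : MvPolynomial (Fin 2) K →+* F) (h : ℕ) :
    φ (hasseA K h) = ((1 + C (φ (MvPolynomial.X 0)) * X ^ 2 + C (φ (MvPolynomial.X 1)) * X ^ 3 :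
      F[X]) ^ h).coeff h := by
  rw [hasseA, ← coeff_map]
  simp

lemma hasse_degree (K : Type*) [Field K] (n k : ℕ) :
    (((1 + C (MvPolynomial.X 0) * X ^ 2 + C (MvPolynomial.X 1) * X ^ 3 :
    (MvPolynomial (Fin 2) K)[X]) ^ n).coeff k).totalDegree ≤ n := by
  induction n generalizing k with
  | zero =>
    rw [pow_zero, coeff_one]
    split_ifs <;> simp
  | succ n ih =>
    set P := (1 + C (MvPolynomial.X 0) * X ^ 2 + C (MvPolynomial.X 1) * X ^ 3 :
      (MvPolynomial (Fin 2) K)[X]) ^ n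
    have e : (1 + C (MvPolynomial.X 0) * X ^ 2 + C (MvPolynomial.X 1) * X ^ 3 :
      (MvPolynomial (Fin 2) K)[X]) ^ (n + 1) = P + C (MvPolynomial.X 0) * (X ^ 2 * P) +
        C (MvPolynomial.X 1) * (X ^ 3 * P) := by
      rw [pow_succ]; ring
    have hx : ∀ (i : Fin 2) (m : ℕ),
        ((C (MvPolynomial.X i) * (X ^ m * P)).coeff k).totalDegree ≤ n + 1 := by
      intro i m
      rw [coeff_C_mul, coeff_X_pow_mul']
      split_ifs
      · refine (MvPolynomial.totalDegree_mul _ _).trans ?_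
        rw [MvPolynomial.totalDegree_X]
        have := ih (k - m)
        omega
      · simp
    rw [e, coeff_add, coeff_add]
    refine (MvPolynomial.totalDegree_add _ _).trans (max_le ?_ (hx 1 3))
    refine (MvPolynomial.totalDegree_add _ _).trans (max_le ?_ (hx 0 2))
    exact (ih k).trans (by omega)

lemma hasseA_ne_zero (K : Type*) [Field K] (p h : ℕ) [Fact p.Prime] [CharP K p] (hph : p = 2 * h + 1)
    (h3 : (3 : K) ≠ 0) : hasseA K h ≠ 0 := by
  intro h0
  have h1 := hasseA_map (MvPolynomial.eval ![(-3 : K), 2]) h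
  have h2 := special_coeff p h hph (1 : K)
  rw [h0, map_zero] at h1
  simp only [MvPolynomial.eval_X, Matrix.cons_val_zero, Matrix.cons_val_one] at h1
  simp only [one_pow, mul_one] at h2
  rw [← h1] at h2
  exact pow_ne_zero h h3 h2.symm

lemma totalDegree_pderiv_lt {K : Type*} [Field K] (i : Fin 2) (Q : MvPolynomial (Fin 2) K)
    (h : MvPolynomial.pderiv i Q ≠ 0) : (MvPolynomial.pderiv i Q).totalDegree < Q.totalDegree := by
  have hpos : ∀ m ∈ (MvPolynomial.pderiv i Q).support, (m.sum fun _ e => e) < Q.totalDegree := by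
    intro m hm
    rw [MvPolynomial.mem_support_iff, MvPolynomial.coeff_pderiv] at hm
    have h1 := left_ne_zero_of_mul hm
    have h2 := MvPolynomial.le_totalDegree (MvPolynomial.mem_support_iff.mpr h1)
    rw [Finsupp.sum_add_index' (by simp) (by simp), Finsupp.sum_single_index rfl] at h2
    omega
  obtain ⟨m, hm⟩ := MvPolynomial.support_nonempty.mpr h
  rw [MvPolynomial.totalDegree, Finset.sup_lt_iff]
  · exact hpos
  · exact lt_of_le_of_lt (Nat.zero_le _) (hpos m hm)

lemma pderiv_eq_zero_of_dvd {K : Type*} [Field K] (i : Fin 2) (Q : MvPolynomial (Fin 2) K)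
    (h : Q ∣ MvPolynomial.pderiv i Q) : MvPolynomial.pderiv i Q = 0 := by
  by_contra h0
  have h1 := totalDegree_pderiv_lt i Q h0
  have h2 := MvPolynomial.totalDegree_le_of_dvd_of_isDomain h h0
  omega

lemma const_of_pderiv {K : Type*} [Field K] (p : ℕ) [CharP K p] (Q : MvPolynomial (Fin 2) K)
    (hQ : Q.totalDegree < p) (h : ∀ i, MvPolynomial.pderiv i Q = 0) : Q.totalDegree = 0 := by
  rw [MvPolynomial.totalDegree_eq_zero_iff]
  intro m hm i
  by_contra hi
  have h1 := congrArg (MvPolynomial.coeff (m - Finsupp.single i 1)) (h i)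
  have hmi : m - Finsupp.single i 1 + Finsupp.single i 1 = m :=
    tsub_add_cancel_of_le (by rw [Finsupp.single_le_iff]; omega)
  have h2 := MvPolynomial.le_totalDegree hm
  have h3 : m i ≤ m.sum fun _ e => e :=
    Finset.single_le_sum (f := m) (fun _ _ => Nat.zero_le _) (by simpa using hi)
  rw [MvPolynomial.coeff_pderiv, hmi, MvPolynomial.coeff_zero] at h1
  have h4 : ((m i : ℕ) : K) = 0 := by
    have h5 := (mul_eq_zero.mp h1).resolve_left (MvPolynomial.mem_support_iff.mp hm)
    rw [← h5]
    have h6 : (m - Finsupp.single i 1 : Fin 2 →₀ ℕ) i + 1 = m i := by simp; omega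
    rw [← h6]; push_cast; rfl
  have h7 := Nat.le_of_dvd (by omega) ((CharP.cast_eq_zero_iff K p _).mp h4)
  omega

lemma totalDegree_pow_aux {K : Type*} [Field K] (Q : MvPolynomial (Fin 2) K) (k : ℕ) :
    (Q ^ k).totalDegree = k * Q.totalDegree := by
  by_cases hQ : Q = 0
  · subst hQ
    cases k <;> simp
  induction k with
  | zero => simp
  | succ k ih =>
    rw [pow_succ, MvPolynomial.totalDegree_mul_of_isDomain (pow_ne_zero k hQ) hQ, ih]; ring

theorem core_dvd {R K : Type*} [CommRing R] [IsDomain R] [CommRing K] [Algebra K R]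
    (d0 d1 : Derivation K R R) (s t : R) (d00 : d0 s = 1) (d11 : d1 t = 1) (d10 : d1 s = 0)
    (d01 : d0 t = 0) (h : ℕ) (hh : 2 ≤ h) (hR0 : (2 * (h : R) + 1) = 0) (Q B : R) (hQ : Prime Q)
    (hB : ¬ Q ∣ B) (n : ℕ)
    (hAB : ((1 + C s * X ^ 2 + C t * X ^ 3 : R[X]) ^ h).coeff h = Q ^ (n + 2) * B)
    (hu4 : ¬ Q ∣ ((4 : ℕ) : R)) (hu1 : ¬ Q ∣ ((n + 1 : ℕ) : R)) (hu2 : ¬ Q ∣ ((n + 2 : ℕ) : R)) :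
    Q ∣ (4 * s ^ 3 + 27 * t ^ 2) * d0 Q ∧ Q ∣ (4 * s ^ 3 + 27 * t ^ 2) * d1 Q := by
  obtain ⟨L, hL⟩ : ∃ L : Derivation ℤ R R, ∀ f, L f = 9 * t * d0 f - 2 * s ^ 2 * d1 f :=
    ⟨((9 * t) • d0 - (2 * s ^ 2) • d1).restrictScalars ℤ, fun f => rfl⟩
  obtain ⟨E, hE⟩ : ∃ E : Derivation ℤ R R, ∀ f, E f = 2 * s * d0 f + 3 * t * d1 f :=
    ⟨((2 * s) • d0 + (3 * t) • d1).restrictScalars ℤ, fun f => rfl⟩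
  have hPF := picard_fuchs L s t (by rw [hL, d00, d10]; ring) (by rw [hL, d01, d11]; ring) h hh hR0
  have hEu := euler_A E s t (by rw [hE, d00, d10]; ring) (by rw [hE, d01, d11]; ring) h
  have hQn : Q ^ n ≠ 0 := pow_ne_zero n hQ.ne_zero
  have hLQ : Q ∣ L Q := by
    have e1 : L ((Q ^ (n + 2) * B)) = (n + 2) * Q ^ (n + 1) * L Q * B + Q ^ (n + 2) * L B := by
      rw [L.leibniz, L.leibniz_pow]
      simp only [smul_eq_mul, nsmul_eq_mul]
      push_cast
      ring
    have hn2 : L (n + 2 : R) = 0 := by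
      have := L.map_natCast (n + 2); push_cast at this; exact this
    have e2 : L (L ((Q ^ (n + 2) * B))) = Q ^ n * ((n + 2) * (n + 1) * L Q ^ 2 * B +
        Q * ((n + 2) * (L (L Q) * B + 2 * (L Q * L B)) + Q * L (L B))) := by
      rw [e1, map_add]
      simp only [L.leibniz, L.leibniz_pow, smul_eq_mul, nsmul_eq_mul, hn2, mul_zero, add_zero]
      push_cast
      ring
    have e3 : 4 * ((n + 2) * (n + 1) * L Q ^ 2 * B +
        Q * ((n + 2) * (L (L Q) * B + 2 * (L Q * L B)) + Q * L (L B))) = 3 * s * (Q ^ 2 * B) := by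
      apply mul_left_cancel₀ hQn
      rw [hAB, e2] at hPF
      linear_combination hPF
    have e4 : Q ∣ ((4 : ℕ) : R) * (((n + 2 : ℕ) : R) *
        (((n + 1 : ℕ) : R) * (L Q ^ 2 * B))) := by
      refine ⟨3 * s * Q * B -
        4 * ((n + 2) * (L (L Q) * B + 2 * (L Q * L B)) + Q * L (L B)), ?_⟩
      push_cast
      linear_combination e3
    have e5 := (hQ.dvd_or_dvd e4).resolve_left hu4
    have e6 := (hQ.dvd_or_dvd e5).resolve_left hu2
    have e7 := (hQ.dvd_or_dvd e6).resolve_left hu1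
    exact hQ.dvd_of_dvd_pow ((hQ.dvd_or_dvd e7).resolve_right hB)
  have hEQ : Q ∣ E Q := by
    have e1 : E ((Q ^ (n + 2) * B)) = Q ^ n * (Q * ((n + 2) * E Q * B + Q * E B)) := by
      rw [E.leibniz, E.leibniz_pow]
      simp only [smul_eq_mul, nsmul_eq_mul]
      push_cast
      ring
    have e3 : (n + 2) * E Q * B + Q * E B = h * (Q * B) := by
      apply mul_left_cancel₀ hQ.ne_zero
      apply mul_left_cancel₀ hQn
      rw [hAB, e1] at hEu
      linear_combination hEu
    have e4 : Q ∣ ((n + 2 : ℕ) : R) * (E Q * B) := by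
      refine ⟨h * B - E B, ?_⟩
      push_cast
      linear_combination e3
    have e5 := (hQ.dvd_or_dvd e4).resolve_left hu2
    exact (hQ.dvd_or_dvd e5).resolve_right hB
  constructor
  · have : (4 * s ^ 3 + 27 * t ^ 2) * d0 Q = 3 * t * L Q + 2 * s ^ 2 * E Q := by
      rw [hL, hE]; ring
    rw [this]
    exact dvd_add (hLQ.mul_left _) (hEQ.mul_left _)
  · have : (4 * s ^ 3 + 27 * t ^ 2) * d1 Q = 9 * t * E Q - 2 * s * L Q := by
      rw [hL, hE]; ring
    rw [this]
    exact dvd_sub (hEQ.mul_left _) (hLQ.mul_left _)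

lemma special_ne_zero {F : Type*} [Field F] (p h : ℕ) [Fact p.Prime] [CharP F p] (hph : p = 2 * h + 1)
    (h2F : (2 : F) ≠ 0) (h3F : (3 : F) ≠ 0) (a b : F) (ha : a ≠ 0) (hD : 4 * a ^ 3 + 27 * b ^ 2 = 0) :
    ((1 + C a * X ^ 2 + C b * X ^ 3 : F[X]) ^ h).coeff h ≠ 0 := by
  obtain ⟨u, hu⟩ : ∃ u, u = -3 * b / (2 * a) := ⟨_, rfl⟩
  have hu1 : 2 * a * u = -3 * b := by rw [hu]; field_simp
  have hsu : a = -3 * u ^ 2 := by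
    apply mul_left_cancel₀ (mul_ne_zero (pow_ne_zero 2 h2F) (pow_ne_zero 2 ha))
    linear_combination hD + 3 * (2 * a * u - 3 * b) * hu1
  have hu0 : u ≠ 0 := by
    rintro rfl
    apply ha; rw [hsu]; ring
  have htu : b = 2 * u ^ 3 := by
    apply mul_left_cancel₀ h3F
    rw [hsu] at hu1
    linear_combination hu1
  rw [hsu, htu, special_coeff p h hph u]
  exact mul_ne_zero (pow_ne_zero h h3F) (pow_ne_zero h hu0)

set_option maxHeartbeats 1000000 in
theorem hasseA_squarefree (K : Type*) [Field K] (p h : ℕ) [hp : Fact p.Prime] [CharP K p]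
    (hph : p = 2 * h + 1) (hh : 2 ≤ h) (Q : MvPolynomial (Fin 2) K) (hQ : Prime Q) :
    ¬ Q ^ 2 ∣ hasseA K h := by
  intro hdvd
  have hcast : ∀ m : ℕ, 0 < m → m < p → (m : K) ≠ 0 := by
    intro m h0 h1 h2
    exact absurd (Nat.le_of_dvd h0 ((CharP.cast_eq_zero_iff K p m).mp h2)) (by omega)
  have hunit : ∀ m : ℕ, 0 < m → m < p → ¬ Q ∣ (m : MvPolynomial (Fin 2) K) := by
    intro m h0 h1 h2
    apply hQ.not_isUnit
    apply isUnit_of_dvd_unit h2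
    rw [← map_natCast (MvPolynomial.C : K →+* MvPolynomial (Fin 2) K)]
    exact (isUnit_iff_ne_zero.mpr (hcast m h0 h1)).map _
  have h2K : (2 : K) ≠ 0 := by simpa using hcast 2 (by omega) (by omega)
  have h3K : (3 : K) ≠ 0 := by simpa using hcast 3 (by omega) (by omega)
  have hA0 := hasseA_ne_zero K p h hph h3K
  have hAdeg : (hasseA K h).totalDegree ≤ h := hasse_degree K h h
  have hQdeg : Q.totalDegree ≠ 0 := by
    intro h0
    rw [MvPolynomial.totalDegree_eq_zero_iff_eq_C] at h0
    apply hQ.not_isUnit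
    rw [h0]
    apply (isUnit_iff_ne_zero.mpr _).map
    intro h1
    rw [h1, map_zero] at h0
    exact hQ.ne_zero h0
  obtain ⟨k, B, hB, hAB⟩ := WfDvdMonoid.max_power_factor hA0 hQ.irreducible
  have hB0 : B ≠ 0 := by rintro rfl; exact hB (dvd_zero _)
  have hk2 : 2 ≤ k := by
    by_contra hk
    have : Q ^ (k + 1) ∣ Q ^ k * B := (pow_dvd_pow Q (by omega)).trans (hAB ▸ hdvd)
    rw [pow_succ] at this
    exact hB ((mul_dvd_mul_iff_left (pow_ne_zero k hQ.ne_zero)).mp this)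
  have hdeg : k * Q.totalDegree ≤ h := by
    have h1 := MvPolynomial.totalDegree_mul_of_isDomain (pow_ne_zero k hQ.ne_zero) hB0
    rw [← hAB, totalDegree_pow_aux] at h1
    omega
  have hkh : k ≤ h := (Nat.le_mul_of_pos_right k (by omega)).trans hdeg
  have hQh : Q.totalDegree ≤ h := (Nat.le_mul_of_pos_left _ (by omega)).trans hdeg
  obtain ⟨s, hs⟩ : ∃ s : MvPolynomial (Fin 2) K, s = MvPolynomial.X 0 := ⟨_, rfl⟩
  obtain ⟨t, ht⟩ : ∃ t : MvPolynomial (Fin 2) K, t = MvPolynomial.X 1 := ⟨_, rfl⟩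
  have d00 : MvPolynomial.pderiv 0 s = 1 := by rw [hs, MvPolynomial.pderiv_X_self]
  have d11 : MvPolynomial.pderiv 1 t = 1 := by rw [ht, MvPolynomial.pderiv_X_self]
  have d10 : MvPolynomial.pderiv 1 s = 0 := by
    rw [hs, MvPolynomial.pderiv_X_of_ne (by decide)]
  have d01 : MvPolynomial.pderiv 0 t = 0 := by
    rw [ht, MvPolynomial.pderiv_X_of_ne (by decide)]
  have hR0 : (2 * (h : MvPolynomial (Fin 2) K) + 1) = 0 := by
    have : ((2 * h + 1 : ℕ) : MvPolynomial (Fin 2) K) = 0 := by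
      rw [← hph]; exact CharP.cast_eq_zero _ _
    push_cast at this; exact this
  have hA : hasseA K h = ((1 + C s * X ^ 2 + C t * X ^ 3 :
    (MvPolynomial (Fin 2) K)[X]) ^ h).coeff h := by rw [hs, ht]; rfl
  obtain ⟨n, rfl⟩ : ∃ n, k = n + 2 := ⟨k - 2, by omega⟩
  obtain ⟨hQs, hQt⟩ := core_dvd (MvPolynomial.pderiv 0) (MvPolynomial.pderiv 1) s t d00 d11 d10 d01 h hh hR0
    Q B hQ hB n (hA.symm.trans hAB) (hunit 4 (by omega) (by omega)) (hunit _ (by omega) (by omega))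
    (hunit _ (by omega) (by omega))
  have hDel : Q ∣ 4 * s ^ 3 + 27 * t ^ 2 := by
    by_contra hnd
    have z0 := pderiv_eq_zero_of_dvd 0 Q ((hQ.dvd_or_dvd hQs).resolve_left hnd)
    have z1 := pderiv_eq_zero_of_dvd 1 Q ((hQ.dvd_or_dvd hQt).resolve_left hnd)
    exact hQdeg (const_of_pderiv p Q (by omega) (by intro i; fin_cases i; exacts [z0, z1]))
  -- specialization
  haveI : (Ideal.span {Q}).IsPrime := (Ideal.span_singleton_prime hQ.ne_zero).mpr hQ
  let F := FractionRing (MvPolynomial (Fin 2) K ⧸ Ideal.span {Q})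
  obtain ⟨φ, hφ⟩ : ∃ φ : MvPolynomial (Fin 2) K →+* F, ∀ a, φ a = 0 ↔ Q ∣ a := by
    refine ⟨(algebraMap (MvPolynomial (Fin 2) K ⧸ Ideal.span {Q}) F).comp (Ideal.Quotient.mk _), ?_⟩
    intro a
    rw [RingHom.comp_apply, FaithfulSMul.algebraMap_eq_zero_iff, Ideal.Quotient.eq_zero_iff_mem,
      Ideal.mem_span_singleton]
  haveI : CharP F p := charP_of_injective_ringHom (φ.comp MvPolynomial.C).injective p
  have hA1 : φ (hasseA K h) = 0 := (hφ _).mpr ((dvd_pow_self Q two_ne_zero).trans hdvd)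
  have h2F : (2 : F) ≠ 0 := by
    have := (map_ne_zero_iff _ (φ.comp MvPolynomial.C).injective).mpr h2K
    rwa [map_ofNat] at this
  have h3F : (3 : F) ≠ 0 := by
    have := (map_ne_zero_iff _ (φ.comp MvPolynomial.C).injective).mpr h3K
    rwa [map_ofNat] at this
  have hD := (hφ _).mpr hDel
  simp only [map_add, map_mul, map_pow, map_ofNat] at hD
  have hs0 : φ s ≠ 0 := by
    intro hs0
    rw [hs0] at hD
    have ht0 : φ t = 0 := by
      have : (3 : F) ^ 3 * φ t ^ 2 = 0 := by linear_combination hD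
      exact pow_eq_zero_iff two_ne_zero |>.mp ((mul_eq_zero.mp this).resolve_left (pow_ne_zero 3 h3F))
    rw [hφ] at hs0 ht0
    have hX : Prime s := by rw [hs]; exact MvPolynomial.X_prime
    have has := hQ.irreducible.associated_of_dvd hX.irreducible hs0
    have hst := has.dvd_iff_dvd_left.mp ht0
    rw [hs, ht, MvPolynomial.X_dvd_X] at hst
    exact absurd hst (by decide)
  rw [hasseA_map, ← hs, ← ht] at hA1
  exact special_ne_zero p h hph h2F h3F _ _ hs0 hD hA1

end squarefree

/-- The leading coefficient `a_{(p-1)/2}` of `θ_{s,t}` is squarefree in `K[s,t]`: no square of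
a prime of `K[s,t]` divides it. -/
theorem theta_leadingCoeff_squarefree (p : ℕ) (hp : p.Prime) (hp5 : 5 ≤ p)
    (K : Type*) [Field K] [CharP K p]
    (θ : Polynomial (MvPolynomial (Fin 2) (ZMod p)))
    (hθ : θ.comp (Polynomial.X ^ p) =
      ((Wst ℤ).preΨ (p : ℤ)).map (MvPolynomial.map (Int.castRingHom (ZMod p)))) :
    ∀ Q : MvPolynomial (Fin 2) K, Prime Q →
      Q ∣ MvPolynomial.map (ZMod.castHom (dvd_refl p) K) (θ.coeff ((p - 1) / 2)) →
      ¬ (Q ^ 2 ∣ MvPolynomial.map (ZMod.castHom (dvd_refl p) K) (θ.coeff ((p - 1) / 2))) := by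
  intro Q hQ _
  haveI : Fact p.Prime := ⟨hp⟩
  obtain ⟨h, hh⟩ : ∃ h, h = (p - 1) / 2 := ⟨_, rfl⟩
  have hodd : p % 2 = 1 := (hp.eq_two_or_odd).resolve_left (by omega)
  have hph : p = 2 * h + 1 := by omega
  rw [preΨ_ofNat] at hθ
  have hθ' : θ.comp (Polynomial.X ^ p) = ((Wst ℤ).preΨ' p).map (red p) := hθ
  have key : MvPolynomial.map (ZMod.castHom (dvd_refl p) K) (θ.coeff h) = hasseA K h := by
    have e := theta_coeff_eq p h hph (by omega) θ hθ'
    have e2 := hasseA_map (K := ZMod p) (MvPolynomial.map (ZMod.castHom (dvd_refl p) K)) h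
    rw [hasseA, ← e, MvPolynomial.map_X, MvPolynomial.map_X] at e2
    exact e2
  rw [← hh, key]
  exact hasseA_squarefree K p h hph (by omega) Q hQ
end

section
/- Let p ≥ 5 be a prime, K a field of characteristic p, and write θ_{s,t}(X) = a_{(p−1)/2} X^{(p−1)/2} + Σ_{i=1}^{(p−3)/2} a_{(p−1)/2+pi} X^{(p−1)/2−i} + a_{(p²−1)/2} for the polynomial with θ_{s,t}(x^p) = ψ_{p,s,t}(x) mod p. Then a_{(p−1)/2} divides a_{(p−1)/2+pi} in K[s,t] for every 1 ≤ i ≤ (p−3)/2, and a_{(p−1)/2} and a_{(p²−1)/2} are relatively prime in K[s,t]. -/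
open WeierstrassCurve Polynomial

/-- abstract: Toda chain implies the elliptic relation -/
lemma ell_of_toda {F : Type*} [Field F] (w X : ℕ → F) (M : ℕ) (x : F) (hX1 : X 1 = x)
    (h1 : w 1 = 1) (hne : ∀ k, 1 ≤ k → k < M → w k ≠ 0)
    (toda : ∀ k, k + 1 < M → w (k + 2) * w k = w (k + 1) ^ 2 * (x - X (k + 1)))
    (e2 : ∀ m, 2 ≤ m → m + 3 ≤ M →
      (x - X (m + 1)) ^ 2 * ((x - X (m + 2)) * (x - X m)) = w 2 ^ 2 * (X 2 - X (m + 1)))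
    (sym : ∀ m n, 1 ≤ n → n < m → m + n + 3 ≤ M →
      (x - X (m + 1)) ^ 2 * ((X (n + 1) - X (m + 2)) * (X (n + 1) - X m)) =
      (x - X (n + 1)) ^ 2 * ((X n - X (m + 1)) * (X (n + 2) - X (m + 1)))) :
    ∀ n r, 2 * (n + 1) + r + 1 ≤ M →
      w (2 * (n + 1) + r + 1) * w (r + 1) =
        w (n + 1 + r + 1) ^ 2 * w (n + 1) ^ 2 * (X (n + 1) - X (n + 1 + r + 1)) := by
  intro n
  induction n using Nat.strong_induction_on with
  | _ n ih =>
    intro r hr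
    match n, ih with
    | 0, ih =>
      have := toda (r + 1) (by omega)
      simp only [zero_add, h1, hX1]
      rw [show 2 * 1 + r + 1 = r + 1 + 2 by ring, show 1 + r + 1 = r + 1 + 1 by ring, this]
      ring
    | 1, ih =>
      have t1 := toda (r + 2) (by omega)
      have t2 := toda (r + 1) (by omega)
      have t3 := toda (r + 3) (by omega)
      have e := e2 (r + 2) (by omega) (by omega)
      have n3 := hne (r + 3) (by omega) (by omega)
      rw [show 2 * (1 + 1) + r + 1 = r + 3 + 2 by ring, show 1 + 1 + r + 1 = r + 3 by ring]
      simp only [add_assoc, Nat.reduceAdd] at *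
      apply mul_right_cancel₀ (pow_ne_zero 2 n3)
      have : w (r + 5) * w (r + 3) * (w (r + 3) * w (r + 1)) =
          w (r + 4) ^ 2 * (x - X (r + 4)) * (w (r + 2) ^ 2 * (x - X (r + 2))) := by
        rw [t3, t2]
      have t1' : (w (r+4) * w (r+2)) ^ 2 = (w (r + 3) ^ 2 * (x - X (r + 3))) ^ 2 := by rw [t1]
      linear_combination this + (x - X (r+4)) * (x - X (r+2)) * t1' + w (r+3) ^ 4 * e
    | n + 2, ih =>
      have a1 := ih (n + 1) (by omega) (r + 2) (by omega)
      have a2 := ih (n + 1) (by omega) r (by omega)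
      have a3 := ih n (by omega) (r + 2) (by omega)
      have s := sym (n + r + 3) (n + 1) (by omega) (by omega) (by omega)
      have t1 := toda (n + r + 3) (by omega)
      have t2 := toda (n + 1) (by omega)
      have n1 := hne (2 * n + r + 5) (by omega) (by omega)
      have n2 := hne (r + 3) (by omega) (by omega)
      have n3 := hne (n + r + 4) (by omega) (by omega)
      have n4 := hne (n + 2) (by omega) (by omega)
      have n5 := hne (n + 1) (by omega) (by omega)
      have q1 : 2 * (n + 1 + 1) + (r + 2) + 1 = 2 * n + r + 7 := by ring
      have q2 : n + 1 + 1 + (r + 2) + 1 = n + r + 5 := by ring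
      have q3 : 2 * (n + 1 + 1) + r + 1 = 2 * n + r + 5 := by ring
      have q4 : n + 1 + 1 + r + 1 = n + r + 3 := by ring
      have q5 : 2 * (n + 1) + (r + 2) + 1 = 2 * n + r + 5 := by ring
      have q6 : n + 1 + (r + 2) + 1 = n + r + 4 := by ring
      have q7 : 2 * (n + 2 + 1) + r + 1 = 2 * n + r + 7 := by ring
      have q8 : n + 2 + 1 + r + 1 = n + r + 4 := by ring
      rw [q1, q2] at a1
      rw [q3, q4] at a2
      rw [q5, q6] at a3
      rw [q7, q8]
      simp only [add_assoc, Nat.reduceAdd] at *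
      have key : (w (2*n+(r+7)) * w (r+1)) * (w (2*n+(r+5)) * w (r+3)) =
        (w (n+(r+4)) ^2 * w (n+3)^2 * (X (n+3) - X (n+(r+4)))) * (w (2*n+(r+5)) * w (r+3)) := by
        apply mul_right_cancel₀ (pow_ne_zero 2 n5)
        calc _ = (w (2*n+(r+7)) * w (r+3)) * (w (2*n+(r+5)) * w (r+1)) * w (n+1) ^ 2 := by ring
          _ = (w (n+(r+5)) * w (n+(r+3)))^2 * w (n+2)^4 *
                ((X (n+2) - X (n+(r+5))) * (X (n+2) - X (n+(r+3)))) * w (n+1)^2 := by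
                rw [a1, a2]; ring
          _ = w (n+(r+4))^4 * w (n+2)^4 * w (n+1)^2 * ((x - X (n + (r + 4))) ^ 2 *
                ((X (n+2) - X (n+(r+5))) * (X (n+2) - X (n+(r+3))))) := by rw [t1]; ring
          _ = w (n+(r+4))^4 * w (n+1)^2 * (w (n+2)^2 * (x - X (n + 2))) ^ 2 *
                ((X (n+1) - X (n+(r+4))) * (X (n+3) - X (n+(r+4)))) := by rw [s]; ring
          _ = _ := by rw [← t2, a3]; ring
      exact mul_right_cancel₀ (mul_ne_zero n1 n2) key

/-- affine multiples of a point -/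
def ptMul {F : Type*} [Field F] [DecidableEq F] (a x y : F) : ℕ → F × F
  | 0 => (0, 0)
  | 1 => (x, y)
  | (n + 2) =>
    let Q := ptMul a x y (n + 1)
    let l := if n = 0 then (3 * x ^ 2 + a) / (2 * y) else (Q.2 - y) / (Q.1 - x)
    (l ^ 2 - x - Q.1, l * (x - (l ^ 2 - x - Q.1)) - y)

section
variable {F : Type*} [Field F]

/-- A chain of points `(X n, Y n)`, `n ≥ 1`, obtained by successively adding `(x, y)`. -/
structure PtChain (a b x y : F) (X Y l : ℕ → F) : Prop where
  curve : y ^ 2 = x ^ 3 + a * x + b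
  y0 : 2 * y ≠ 0
  X1 : X 1 = x
  Y1 : Y 1 = y
  l1 : l 1 = (3 * x ^ 2 + a) / (2 * y)
  ln : ∀ n, 2 ≤ n → l n = (Y n - y) / (X n - x)
  Xs : ∀ n, 1 ≤ n → X (n + 1) = l n ^ 2 - x - X n
  Ys : ∀ n, 1 ≤ n → Y (n + 1) = l n * (x - X (n + 1)) - y

lemma exists_ptChain (a b x y : F) (h : y ^ 2 = x ^ 3 + a * x + b) (hy : 2 * y ≠ 0) :
    ∃ X Y l, PtChain a b x y X Y l := by
  classical
  refine ⟨fun n => (ptMul a x y n).1, fun n => (ptMul a x y n).2,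
    fun n => if n = 1 then (3 * x ^ 2 + a) / (2 * y) else
      ((ptMul a x y n).2 - y) / ((ptMul a x y n).1 - x), h, hy, by simp [ptMul], by simp [ptMul],
      by simp, ?_, ?_, ?_⟩
  · intro n hn
    simp [show n ≠ 1 by omega]
  · intro n hn
    obtain ⟨n, rfl⟩ := Nat.exists_eq_add_of_le' hn
    simp [ptMul]
  · intro n hn
    obtain ⟨n, rfl⟩ := Nat.exists_eq_add_of_le' hn
    simp [ptMul]

namespace PtChain
variable {a b x y : F} {X Y l : ℕ → F}

/-- slope relation: `a` is determined by `x, y, l, d`. -/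
lemma a_eq (c : PtChain a b x y X Y l) (n : ℕ) (hn : 1 ≤ n) (hX : 2 ≤ n → X n ≠ x)
    (hc : Y n ^ 2 = X n ^ 3 + a * X n + b) :
    Y n = y + l n * (X n - x) ∧
    a = 2 * y * l n + l n ^ 2 * (X n - x) - 3 * x ^ 2 - 3 * x * (X n - x) - (X n - x) ^ 2 := by
  rcases Nat.lt_or_ge n 2 with h | h
  · obtain rfl : n = 1 := by omega
    have h1 := c.l1
    rw [eq_div_iff c.y0] at h1
    rw [c.X1, c.Y1]
    constructor
    · ring
    · linear_combination -h1
  · have h1 := c.ln n h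
    have h2 : X n - x ≠ 0 := sub_ne_zero.2 (hX h)
    rw [eq_div_iff h2] at h1
    have h3 : Y n = y + l n * (X n - x) := by linear_combination -h1
    refine ⟨h3, mul_right_cancel₀ h2 ?_⟩
    rw [h3] at hc
    have := c.curve
    linear_combination this - hc

lemma curve_n (c : PtChain a b x y X Y l) (n : ℕ) (hX : ∀ j, 2 ≤ j → j ≤ n → X j ≠ x) :
    Y (n + 1) ^ 2 = X (n + 1) ^ 3 + a * X (n + 1) + b := by
  induction n with
  | zero => simpa [c.X1, c.Y1] using c.curve
  | succ n ih =>
    have hc := ih fun j h1 h2 => hX j h1 (by omega)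
    obtain ⟨h1, h2⟩ := c.a_eq (n + 1) (by omega) (fun h => hX _ h le_rfl) hc
    have h3 := c.curve
    rw [c.Ys (n + 1) (by omega), c.Xs (n + 1) (by omega)]
    generalize X (n + 1) = u at *
    generalize l (n + 1) = v at *
    obtain rfl : b = y ^ 2 - x ^ 3 - a * x := by linear_combination -h3
    subst h2
    ring

lemma next (c : PtChain a b x y X Y l) (n : ℕ) (hn : 2 ≤ n) (hX : X n ≠ x) :
    (X n - x) ^ 2 * X (n + 1) = (Y n - y) ^ 2 - (x + X n) * (X n - x) ^ 2 := by
  have h2 : X n - x ≠ 0 := sub_ne_zero.2 hX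
  have h1 := c.ln n hn
  rw [eq_div_iff h2] at h1
  rw [c.Xs n (by omega), ← h1]; ring

lemma prev (c : PtChain a b x y X Y l) (n : ℕ) (hn : 1 ≤ n) :
    (X (n + 1) - x) ^ 2 * X n =
      (Y (n + 1) + y) ^ 2 - (x + X (n + 1)) * (X (n + 1) - x) ^ 2 := by
  have h1 := c.Ys n hn
  have h2 := c.Xs n hn
  have h3 : X n = l n ^ 2 - x - X (n + 1) := by linear_combination h2
  rw [h3, h1]; ring

lemma sum_prod (c : PtChain a b x y X Y l) (n : ℕ) (hn : 1 ≤ n)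
    (hX : ∀ j, 2 ≤ j → j ≤ n + 1 → X j ≠ x) :
    (X (n + 1) - x) ^ 2 * (X (n + 2) + X n) =
      2 * ((x + X (n + 1)) * (a + x * X (n + 1)) + 2 * b) ∧
    (X (n + 1) - x) ^ 2 * (X (n + 2) * X n) =
      (x * X (n + 1) - a) ^ 2 - 4 * b * (x + X (n + 1)) := by
  have h1 := c.next (n + 1) (by omega) (hX _ (by omega) le_rfl)
  have h2 := c.prev n hn
  have h3 := c.curve_n n fun j h1 h2 => hX _ h1 (by omega)
  have h4 := c.curve
  have h5 : X (n + 1) - x ≠ 0 := sub_ne_zero.2 (hX _ (by omega) le_rfl)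
  rw [show n + 1 + 1 = n + 2 by rfl] at h1
  generalize X (n + 1) = u at *
  generalize Y (n + 1) = v at *
  constructor
  · linear_combination h1 + h2 + 2 * h3 + 2 * h4
  · apply mul_left_cancel₀ (pow_ne_zero 2 h5)
    have : (u - x) ^ 2 * ((u - x) ^ 2 * (X (n + 2) * X n)) =
        ((u - x) ^ 2 * X (n + 2)) * ((u - x) ^ 2 * X n) := by ring
    rw [this, h1, h2]
    obtain rfl : b = y ^ 2 - x ^ 3 - a * x := by linear_combination -h4
    have h6 : v ^ 2 = y ^ 2 + (u - x) * (u ^ 2 + u * x + x ^ 2 + a) := by linear_combination h3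
    linear_combination (v ^ 2 + (y ^ 2 + (u - x) * (u ^ 2 + u * x + x ^ 2 + a)) - 2 * y ^ 2 -
      2 * (x + u) * (u - x) ^ 2) * h6

lemma X2_eq (c : PtChain a b x y X Y l) :
    4 * y ^ 2 * X 2 = (3 * x ^ 2 + a) ^ 2 - 8 * x * y ^ 2 := by
  have h1 := c.l1
  have h2 : X 2 = _ := c.Xs 1 le_rfl
  rw [eq_div_iff c.y0] at h1
  rw [c.X1] at h2
  rw [h2, ← h1]; ring

lemma e2 (c : PtChain a b x y X Y l) (n : ℕ) (hn : 1 ≤ n)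
    (hX : ∀ j, 2 ≤ j → j ≤ n + 1 → X j ≠ x) :
    (x - X (n + 1)) ^ 2 * ((x - X (n + 2)) * (x - X n)) =
      (2 * y) ^ 2 * (X 2 - X (n + 1)) := by
  obtain ⟨s, p⟩ := c.sum_prod n hn hX
  have h2 := c.X2_eq
  have h4 := c.curve
  obtain rfl : b = y ^ 2 - x ^ 3 - a * x := by linear_combination -h4
  linear_combination p - x * s - h2

lemma sym (c : PtChain a b x y X Y l) (m n : ℕ) (hn : 1 ≤ n) (hm : 1 ≤ m)
    (hX : ∀ j, 2 ≤ j → j ≤ n + 1 → X j ≠ x) (hX' : ∀ j, 2 ≤ j → j ≤ m + 1 → X j ≠ x) :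
      (x - X (m + 1)) ^ 2 * ((X (n + 1) - X (m + 2)) * (X (n + 1) - X m)) =
      (x - X (n + 1)) ^ 2 * ((X n - X (m + 1)) * (X (n + 2) - X (m + 1))) := by
  obtain ⟨s, p⟩ := c.sum_prod n hn hX
  obtain ⟨s', p'⟩ := c.sum_prod m hm hX'
  linear_combination p' - X (n + 1) * s' - (p - X (m + 1) * s)

end PtChain
end

section
variable {F : Type*} [Field F]

/-- The sequence of division polynomials satisfies the Toda-type relation with the chain. -/
lemma PtChain.toda {a b x y : F} {X Y l : ℕ → F} (c : PtChain a b x y X Y l) (w : ℕ → F)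
    (hne : ∀ k, 1 ≤ k → w k ≠ 0)
    (w0 : w 0 = 0) (w1 : w 1 = 1) (w2 : w 2 = 2 * y)
    (w3 : w 3 = 3 * x ^ 4 + 6 * a * x ^ 2 + 12 * b * x - a ^ 2)
    (w4 : w 4 = (2 * x ^ 6 + 10 * a * x ^ 4 + 40 * b * x ^ 3 - 10 * a ^ 2 * x ^ 2 - 8 * a * b * x
      - 2 * a ^ 3 - 16 * b ^ 2) * (2 * y))
    (wodd : ∀ m, w (2 * (m + 2) + 1) = w (m + 4) * w (m + 2) ^ 3 - w (m + 1) * w (m + 3) ^ 3)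
    (weven : ∀ m, w (2 * (m + 3)) * w 2 =
      w (m + 2) ^ 2 * w (m + 3) * w (m + 5) - w (m + 1) * w (m + 3) * w (m + 4) ^ 2) :
    ∀ k, w (k + 2) * w k = w (k + 1) ^ 2 * (x - X (k + 1)) := by
  intro k
  induction k using Nat.strong_induction_on with
  | _ k ih =>
    have hXne : ∀ j, 2 ≤ j → j ≤ k → X j ≠ x := by
      intro j h1 h2 h3
      obtain ⟨j, rfl⟩ := Nat.exists_eq_add_of_le' h1
      have := ih (j + 1) (by omega)
      rw [show j + 1 + 1 = j + 2 by rfl, h3, sub_self, mul_zero] at this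
      exact mul_ne_zero (hne _ (by omega)) (hne _ (by omega)) this
    match k, ih, hXne with
    | 0, _, _ => simp [w0, c.X1]
    | 1, _, _ =>
      have h2 := c.X2_eq
      have h4 := c.curve
      obtain rfl : b = y ^ 2 - x ^ 3 - a * x := by linear_combination -h4
      simp only [Nat.reduceAdd]
      rw [w1, w2, w3]
      linear_combination h2
    | 2, ih, hXne =>
      have h3 := (c.sum_prod 1 le_rfl (fun j h1 h2 => hXne j h1 (by omega))).1
      have t := ih 1 (by omega)
      have h2 := c.X2_eq
      have h4 := c.curve
      rw [c.X1] at h3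
      obtain rfl : b = y ^ 2 - x ^ 3 - a * x := by linear_combination -h4
      simp only [Nat.reduceAdd, w1, mul_one] at *
      rw [t, w4, w2]
      have e1 : ((2 * y) ^ 2 * (x - X 2)) ^ 2 * (x - X 3) = (2 * y) ^ 4 * (2 * x * (X 2 - x) ^ 2 -
        (X 2 - x) ^ 2 * (X 3 + x)) := by ring
      have e3 : (2 * y) ^ 4 * (2 * x * (X 2 - x) ^ 2 -
          2 * ((x + X 2) * (a + x * X 2) + 2 * (y ^ 2 - x ^ 3 - a * x))) =
        2 * x * (4 * y ^ 2 * X 2 - 4 * y ^ 2 * x) ^ 2 - 2 * ((4 * y ^ 2 * x + 4 * y ^ 2 * X 2) *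
          (4 * y ^ 2 * a + x * (4 * y ^ 2 * X 2)) +
            32 * y ^ 4 * (y ^ 2 - x ^ 3 - a * x)) := by ring
      rw [e1, h3, e3, h2]
      ring
    | k + 3, ih, hXne =>
      let w' : ℕ → F := fun n => if n = k + 5 then w (k + 4) ^ 2 * (x - X (k + 4)) / w (k + 3)
        else w n
      have hw' : ∀ n, n < k + 5 → w' n = w n := fun n hn => if_neg (by omega)
      have hw5 : w' (k + 5) = w (k + 4) ^ 2 * (x - X (k + 4)) / w (k + 3) := if_pos rfl
      have tod : ∀ j, j + 1 < k + 5 → w' (j + 2) * w' j = w' (j + 1) ^ 2 * (x - X (j + 1)) := by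
        intro j hj
        rw [hw' j (by omega), hw' (j + 1) hj]
        rcases Nat.lt_or_ge j (k + 3) with h | h
        · rw [hw' _ (by omega)]
          exact ih j h
        · obtain rfl : j = k + 3 := by omega
          rw [show k + 3 + 2 = k + 5 by rfl, hw5]
          exact div_mul_cancel₀ _ (hne _ (by omega))
      have A := ell_of_toda w' X (k + 5) x c.X1 (by rw [hw' _ (by omega), w1])
        (fun j h1 h2 => by rw [hw' _ h2]; exact hne _ h1) tod
        (fun m h1 h2 => by
          rw [hw' 2 (by omega), w2]
          exact c.e2 m (by omega) (fun j h3 h4 => hXne j h3 (by omega)))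
        (fun m n h1 h2 h3 => c.sym m n h1 (by omega) (fun j h3 h4 => hXne j h3 (by omega))
          (fun j h3 h4 => hXne j h3 (by omega)))
      have key : w' (k + 5) = w (k + 5) := by
        rcases Nat.even_or_odd' k with ⟨m, rfl | rfl⟩
        · have := A (m + 1) 0 (by omega)
          have o := wodd m
          have t1 := ih (m + 2) (by omega)
          have t2 := ih (m + 1) (by omega)
          rw [show 2 * (m + 1 + 1) + 0 + 1 = 2 * m + 5 by ring, hw' (0 + 1) (by omega),
            hw' (m + 1 + 1 + 0 + 1) (by omega), hw' (m + 1 + 1) (by omega)] at this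
          rw [show 2 * (m + 2) + 1 = 2 * m + 5 by ring] at o
          simp only [add_assoc, Nat.reduceAdd, zero_add, w1, mul_one, add_zero] at *
          rw [this, o]
          linear_combination w (m + 3) ^ 2 * t2 - w (m + 2) ^ 2 * t1
        · have := A (m + 1) 1 (by omega)
          have o := weven m
          have t1 := ih (m + 3) (by omega)
          have t2 := ih (m + 1) (by omega)
          rw [show 2 * (m + 1 + 1) + 1 + 1 = 2 * m + 1 + 5 by ring, hw' (1 + 1) (by omega),
            hw' (m + 1 + 1 + 1 + 1) (by omega), hw' (m + 1 + 1) (by omega)] at this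
          rw [show 2 * (m + 3) = 2 * m + 1 + 5 by ring] at o
          apply mul_right_cancel₀ (hne 2 (by omega))
          simp only [add_assoc, Nat.reduceAdd] at *
          rw [this, o]
          linear_combination w (m + 4) ^ 2 * t2 - w (m + 2) ^ 2 * t1
      have := tod (k + 3) (by omega)
      rwa [show k + 3 + 2 = k + 5 by rfl, key, hw' _ (by omega), hw' _ (by omega)] at this
end

section
variable {F : Type*} [Field F]

lemma PtChain.deriv {a b x y : F} {X Y l : ℕ → F} (c : PtChain a b x y X Y l)
    (δ : Derivation ℤ F F) (da : δ a = 0) (dx : δ x = 2 * y) (dy : δ y = 3 * x ^ 2 + a)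
    (hX : ∀ j, 2 ≤ j → X j ≠ x) (n : ℕ) :
    δ (X (n + 1)) = 2 * ((n + 1 : ℕ) : F) * Y (n + 1) ∧
    δ (Y (n + 1)) = ((n + 1 : ℕ) : F) * (3 * X (n + 1) ^ 2 + a) ∧
    δ (l (n + 1)) = ((n + 1 : ℕ) : F) * (3 * x + 2 * (X (n + 1) - x) - l (n + 1) ^ 2) +
      (3 * x + (X (n + 1) - x) - l (n + 1) ^ 2) := by
  have hl : ∀ n : ℕ, δ (X (n + 1)) = 2 * ((n + 1 : ℕ) : F) * Y (n + 1) →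
      δ (Y (n + 1)) = ((n + 1 : ℕ) : F) * (3 * X (n + 1) ^ 2 + a) →
    δ (l (n + 1)) = ((n + 1 : ℕ) : F) * (3 * x + 2 * (X (n + 1) - x) - l (n + 1) ^ 2) +
      (3 * x + (X (n + 1) - x) - l (n + 1) ^ 2) := by
    intro n h1 h2
    rcases n with _ | n
    · have h := c.l1
      rw [eq_div_iff c.y0] at h
      have h' := congrArg δ h
      simp only [Derivation.leibniz, map_add, da, dy, smul_eq_mul,
        pow_two, dx, show (3 : F) = ((3 : ℕ) : F) by norm_cast,
        show (2 : F) = ((2 : ℕ) : F) by norm_cast, Derivation.map_natCast] at h'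
      push_cast at h'
      have hy0 := c.y0
      apply mul_left_cancel₀ hy0
      simp only [zero_add, c.X1]
      push_cast
      linear_combination h' + 2 * l 1 * h
    · have h := c.ln (n + 2) (by omega)
      have hne : X (n + 2) - x ≠ 0 := sub_ne_zero.2 (hX _ (by omega))
      rw [eq_div_iff hne] at h
      have h' := congrArg δ h
      obtain ⟨h3, h4⟩ := c.a_eq (n + 2) (by omega) (fun _ => hX _ (by omega))
        (c.curve_n (n + 1) fun j h _ => hX j h)
      simp only [show n + 1 + 1 = n + 2 by rfl] at *
      simp only [Derivation.leibniz, map_sub, h1, h2, dx, dy, smul_eq_mul] at h'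
      rw [h3] at h'
      apply mul_left_cancel₀ hne
      linear_combination h' + (((n + 2 : ℕ) : F) - 1) * h4
  suffices H : δ (X (n + 1)) = 2 * ((n + 1 : ℕ) : F) * Y (n + 1) ∧
      δ (Y (n + 1)) = ((n + 1 : ℕ) : F) * (3 * X (n + 1) ^ 2 + a) from
    ⟨H.1, H.2, hl n H.1 H.2⟩
  induction n with
  | zero => simp [c.X1, c.Y1, dx, dy]
  | succ n ih =>
    have h5 := hl n ih.1 ih.2
    obtain ⟨h3, h4⟩ := c.a_eq (n + 1) (by omega) (hX _)
        (c.curve_n n fun j h _ => hX j h)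
    have e1 := c.Xs (n + 1) (by omega)
    have e2 := c.Ys (n + 1) (by omega)
    have d1 := congrArg δ e1
    have d2 := congrArg δ e2
    simp only [pow_two, Derivation.leibniz, map_sub, ih.1, dx, dy, h5, smul_eq_mul] at d1 d2
    have d1' : δ (X (n + 1 + 1)) = 2 * ((n + 1 + 1 : ℕ) : F) * Y (n + 1 + 1) := by
      rw [d1, e2, e1, h3]
      push_cast
      ring
    refine ⟨d1', ?_⟩
    rw [d2, d1', e2, e1]
    push_cast
    linear_combination (-((n : F) + 2)) * h4 - h4

/-- The Toda equation for division polynomials. -/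
lemma PtChain.toda_deriv {a b x y : F} {X Y l : ℕ → F} (c : PtChain a b x y X Y l)
    (δ : Derivation ℤ F F) (da : δ a = 0) (dx : δ x = 2 * y) (dy : δ y = 3 * x ^ 2 + a)
    (w : ℕ → F) (hne : ∀ k, 1 ≤ k → w k ≠ 0) (w1 : w 1 = 1) (w2 : w 2 = 2 * y)
    (tod : ∀ k, w (k + 2) * w k = w (k + 1) ^ 2 * (x - X (k + 1))) (n : ℕ) :
    w (n + 1) * δ (δ (w (n + 1))) - δ (w (n + 1)) ^ 2 =
      ((n + 1 : ℕ) : F) ^ 2 * (w (n + 2) * w n) := by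
  have hX : ∀ j, 2 ≤ j → X j ≠ x := by
    intro j h1 h3
    obtain ⟨j, rfl⟩ := Nat.exists_eq_add_of_le' h1
    have := tod (j + 1)
    rw [show j + 1 + 1 = j + 2 by rfl, h3, sub_self, mul_zero] at this
    exact mul_ne_zero (hne _ (by omega)) (hne _ (by omega)) this
  have D := c.deriv δ da dx dy hX
  have two : δ (2 : F) = 0 := by exact_mod_cast δ.map_natCast 2
  -- logarithmic derivatives
  obtain ⟨e, he⟩ : ∃ e : ℕ → F, ∀ n, δ (w (n + 1)) = e (n + 1) * w (n + 1) :=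
    ⟨fun n => δ (w n) / w n, fun n => (div_mul_cancel₀ _ (hne _ (by omega))).symm⟩
  have e1 : e 1 = 0 := by
    have := he 0
    simpa [w1] using this.symm
  have e2 : e 2 = 2 * l 1 := by
    have h := he 1
    have h1 := c.l1
    rw [eq_div_iff c.y0] at h1
    simp only [Nat.reduceAdd, w2, Derivation.leibniz, two, dy, smul_eq_mul] at h
    apply mul_right_cancel₀ c.y0
    linear_combination -h - 2 * h1
  have step : ∀ n, e (n + 3) = 2 * e (n + 2) - e (n + 1) +
      2 * (((n + 2 : ℕ) : F) * Y (n + 2) - y) / (X (n + 2) - x) := by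
    intro n
    have h0 : X (n + 2) - x ≠ 0 := sub_ne_zero.2 (hX _ (by omega))
    have h := tod (n + 1)
    have h' := congrArg δ h
    have d1 := (D (n + 1)).1
    have k1 := he n
    have k2 := he (n + 1)
    have k3 := he (n + 2)
    have n1 := hne (n + 1) (by omega)
    have n2 := hne (n + 2) (by omega)
    have n3 := hne (n + 3) (by omega)
    simp only [add_assoc, Nat.reduceAdd] at *
    simp only [Derivation.leibniz, pow_two, map_sub, d1, k1, k2, k3, dx, smul_eq_mul] at h'
    apply mul_right_cancel₀ h0
    rw [add_mul, div_mul_cancel₀ _ h0]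
    apply mul_right_cancel₀ (pow_ne_zero 2 n2)
    linear_combination -h' + (e (n + 3) + e (n + 1)) * h
  have main : ∀ n, δ (e (n + 1)) = ((n + 1 : ℕ) : F) ^ 2 * (x - X (n + 1)) := by
    intro n
    induction n using Nat.strong_induction_on with
    | _ n ih =>
      match n, ih with
      | 0, _ => simp [e1, c.X1]
      | 1, _ =>
        have h := c.Xs 1 le_rfl
        have := (D 0).2.2
        simp only [zero_add, c.X1, Nat.reduceAdd] at *
        rw [e2, Derivation.leibniz, two, this, h]
        push_cast
        simp only [smul_eq_mul]
        ring
      | n + 2, ih =>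
        have i1 := ih n (by omega)
        have i2 := ih (n + 1) (by omega)
        have h0 : X (n + 2) - x ≠ 0 := sub_ne_zero.2 (hX _ (by omega))
        obtain ⟨d1, d2, -⟩ := D (n + 1)
        have pr := c.prev (n + 1) (by omega)
        have nx := c.next (n + 2) (by omega) (hX _ (by omega))
        have cn := c.curve_n (n + 1) fun j h _ => hX j h
        have cc := c.curve
        obtain ⟨g, hg⟩ : ∃ g, g = 2 * (((n + 2 : ℕ) : F) * Y (n + 2) - y) / (X (n + 2) - x) :=
          ⟨_, rfl⟩
        have st := step n
        rw [← hg] at st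
        rw [eq_div_iff h0] at hg
        have hg' := congrArg δ hg
        simp only [add_assoc, Nat.reduceAdd] at *
        simp only [Derivation.leibniz, map_sub, d1, d2, dx, dy, two, smul_eq_mul,
          Derivation.map_natCast] at hg'
        rw [st, map_add, map_sub, Derivation.leibniz, two, i1, i2]
        simp only [smul_eq_mul]
        apply mul_left_cancel₀ (pow_ne_zero 2 h0)
        push_cast at *
        linear_combination (X (n + 2) - x) * hg' - (2 * ((n : F) + 2) * Y (n + 2) - 2 * y) * hg +
          ((n : F) + 1) ^ 2 * pr + ((n : F) + 3) ^ 2 * nx +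
          (2 - 2 * ((n : F) + 2) ^ 2) * (cn - cc)
  have h := tod n
  rw [h, he n, Derivation.leibniz, he n, main n]
  simp only [smul_eq_mul]
  ring
end
/-- the evaluation `ℤ[s,t][X] → F`. -/
noncomputable def evST {F : Type*} [CommRing F] (a b x : F) :
    Polynomial (MvPolynomial (Fin 2) ℤ) →+* F :=
  Polynomial.eval₂RingHom (MvPolynomial.eval₂Hom (Int.castRingHom F) ![a, b]) x

@[simp] lemma evST_X {F : Type*} [CommRing F] (a b x : F) : evST a b x Polynomial.X = x := by
  simp [evST]

@[simp] lemma evST_s {F : Type*} [CommRing F] (a b x : F) :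
    evST a b x (Polynomial.C (MvPolynomial.X 0)) = a := by
  simp [evST]

@[simp] lemma evST_t {F : Type*} [CommRing F] (a b x : F) :
    evST a b x (Polynomial.C (MvPolynomial.X 1)) = b := by
  simp [evST]

lemma evST_ext {F : Type*} [CommRing F] (g : Polynomial (MvPolynomial (Fin 2) ℤ) →+* F)
    (a b x : F) (hx : g Polynomial.X = x) (ha : g (Polynomial.C (MvPolynomial.X 0)) = a)
    (hb : g (Polynomial.C (MvPolynomial.X 1)) = b) : g = evST a b x := by
  apply Polynomial.ringHom_ext'
  · apply MvPolynomial.ringHom_ext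
    · intro r; simp
    · intro k
      fin_cases k
      · simpa using ha
      · simpa using hb
  · simpa using hx

lemma exists_deriv_aux {F : Type} [Field F] [Algebra (MvPolynomial (Fin 3) ℤ) F]
    [IsFractionRing (MvPolynomial (Fin 3) ℤ) F] (x y a : F)
    (hx : x = algebraMap (MvPolynomial (Fin 3) ℤ) F (MvPolynomial.X 0))
    (hy : y = algebraMap (MvPolynomial (Fin 3) ℤ) F (MvPolynomial.X 1))
    (ha : a = algebraMap (MvPolynomial (Fin 3) ℤ) F (MvPolynomial.X 2)) :
    ∃ δ : Derivation ℤ F F, δ a = 0 ∧ δ x = 2 * y ∧ δ y = 3 * x ^ 2 + a := by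
  obtain ⟨g, hg0, hg1, hg2⟩ : ∃ g : MvPolynomial (Fin 3) ℤ →+* DualNumber F,
      g (MvPolynomial.X 0) = TrivSqZeroExt.inl x + TrivSqZeroExt.inr (2 * y) ∧
      g (MvPolynomial.X 1) = TrivSqZeroExt.inl y + TrivSqZeroExt.inr (3 * x ^ 2 + a) ∧
      g (MvPolynomial.X 2) = TrivSqZeroExt.inl a := by
    refine ⟨MvPolynomial.eval₂Hom (Int.castRingHom (DualNumber F))
      ![TrivSqZeroExt.inl x + TrivSqZeroExt.inr (2 * y),
      TrivSqZeroExt.inl y + TrivSqZeroExt.inr (3 * x ^ 2 + a), TrivSqZeroExt.inl a], ?_, ?_, ?_⟩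
      <;> simp
  have hfst : (TrivSqZeroExt.fstHom F F F).toRingHom.comp g =
      algebraMap (MvPolynomial (Fin 3) ℤ) F := by
    apply MvPolynomial.ringHom_ext
    · intro r; simp
    · intro j
      fin_cases j
      · simp [hg0, ← hx]
      · simp [hg1, ← hy]
      · simp [hg2, ← ha]
  have hg : ∀ q, TrivSqZeroExt.fst (g q) = algebraMap (MvPolynomial (Fin 3) ℤ) F q := fun q =>
    RingHom.congr_fun hfst q
  have hu : ∀ q : nonZeroDivisors (MvPolynomial (Fin 3) ℤ), IsUnit (g q) := by
    intro q
    rw [TrivSqZeroExt.isUnit_iff_isUnit_fst, hg]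
    exact IsLocalization.map_units F q
  obtain ⟨G, hGi⟩ : ∃ G : F →+* DualNumber F,
      ∀ q, G (algebraMap (MvPolynomial (Fin 3) ℤ) F q) = g q :=
    ⟨IsLocalization.lift hu, fun q => IsLocalization.lift_eq hu q⟩
  have hG : ∀ z, TrivSqZeroExt.fst (G z) = z := by
    intro z
    have : (TrivSqZeroExt.fstHom F F F).toRingHom.comp G = RingHom.id F := by
      apply IsLocalization.ringHom_ext (nonZeroDivisors (MvPolynomial (Fin 3) ℤ))
      apply RingHom.ext
      intro q
      exact (congrArg TrivSqZeroExt.fst (hGi q)).trans (hg q)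
    exact RingHom.congr_fun this z
  let D : F →+ F :=
    { toFun := fun z => TrivSqZeroExt.snd (G z)
      map_zero' := by simp
      map_add' := fun u v => by simp }
  have hD : ∀ q, D (algebraMap (MvPolynomial (Fin 3) ℤ) F q) = TrivSqZeroExt.snd (g q) :=
    fun q => by rw [← hGi]; rfl
  refine ⟨Derivation.mk' D.toIntLinearMap (fun u v => ?_), ?_, ?_, ?_⟩
  · change TrivSqZeroExt.snd (G (u * v)) = u * TrivSqZeroExt.snd (G v) + v * TrivSqZeroExt.snd (G u)
    simp [hG, mul_comm]
  · change D a = 0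
    rw [ha, hD, hg2]; simp
  · change D x = _
    rw [hx, hD, hg0]; simp [hx]
  · change D y = _
    rw [hy, hD, hg1]; simp

lemma exists_inj_aux (F : Type*) [Field F] [Algebra (MvPolynomial (Fin 3) ℤ) F]
    [IsFractionRing (MvPolynomial (Fin 3) ℤ) F] (x y a b : F)
    (hx : x = algebraMap (MvPolynomial (Fin 3) ℤ) F (MvPolynomial.X 0))
    (hy : y = algebraMap (MvPolynomial (Fin 3) ℤ) F (MvPolynomial.X 1))
    (ha : a = algebraMap (MvPolynomial (Fin 3) ℤ) F (MvPolynomial.X 2))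
    (hb : b = y ^ 2 - x ^ 3 - a * x)
    (Ω : Type*) [Field Ω] [IsAlgClosed Ω] (ι : Polynomial (MvPolynomial (Fin 2) ℤ) →+* Ω)
    (hι : Function.Injective ι) :
    Function.Injective (evST a b x) := by
  have e : evST a b x = (algebraMap (MvPolynomial (Fin 3) ℤ) F).comp
      (evST (MvPolynomial.X 2) (MvPolynomial.X 1 ^ 2 - MvPolynomial.X 0 ^ 3 -
        MvPolynomial.X 2 * MvPolynomial.X 0) (MvPolynomial.X 0)) := by
    symm
    apply evST_ext <;> simp [hx, hy, ha, hb]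
  rw [e]
  refine (IsFractionRing.injective (MvPolynomial (Fin 3) ℤ) F).comp ?_
  obtain ⟨r, hr⟩ := IsAlgClosed.exists_pow_nat_eq (ι (Polynomial.X ^ 3 +
    Polynomial.C (MvPolynomial.X 0) * Polynomial.X + Polynomial.C (MvPolynomial.X 1)))
    (n := 2) (by norm_num)
  have : (MvPolynomial.eval₂Hom (Int.castRingHom Ω) ![ι Polynomial.X, r,
      ι (Polynomial.C (MvPolynomial.X 0))]).comp (evST (MvPolynomial.X 2)
      (MvPolynomial.X 1 ^ 2 - MvPolynomial.X 0 ^ 3 -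
        MvPolynomial.X 2 * MvPolynomial.X 0) (MvPolynomial.X 0)) = ι := by
    rw [evST_ext ι _ _ _ rfl rfl rfl]
    apply evST_ext
    · simp
    · simp
    · simp [hr]
      ring
  have h2 := hι
  rw [← this] at h2
  exact Function.Injective.of_comp (f := ⇑(MvPolynomial.eval₂Hom (Int.castRingHom Ω)
    ![ι Polynomial.X, r, ι (Polynomial.C (MvPolynomial.X 0))])) h2

/-- A derivation on the fraction field of `ℤ[x,y,a]`. -/
lemma exists_field_derivation :
    ∃ (F : Type) (_ : Field F) (δ : Derivation ℤ F F) (a b x y : F),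
      y ^ 2 = x ^ 3 + a * x + b ∧ 2 * y ≠ 0 ∧ δ a = 0 ∧ δ b = 0 ∧ δ x = 2 * y ∧
      δ y = 3 * x ^ 2 + a ∧ Function.Injective (evST a b x) := by
  obtain ⟨δ, da, dx, dy⟩ := exists_deriv_aux (F := FractionRing (MvPolynomial (Fin 3) ℤ))
    _ _ _ rfl rfl rfl
  have hinj := exists_inj_aux (FractionRing (MvPolynomial (Fin 3) ℤ)) _ _ _ _ rfl rfl rfl rfl
    (AlgebraicClosure (FractionRing (Polynomial (MvPolynomial (Fin 2) ℤ))))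
    ((algebraMap (FractionRing (Polynomial (MvPolynomial (Fin 2) ℤ))) _).comp (algebraMap _ _))
    ((algebraMap (FractionRing (Polynomial (MvPolynomial (Fin 2) ℤ))) _).injective.comp
      (IsFractionRing.injective _ _))
  refine ⟨_, _, δ, _, _, _, _, ?_, ?_, da, ?_, dx, dy, hinj⟩
  · ring
  · have h2 : (2 : FractionRing (MvPolynomial (Fin 3) ℤ)) = algebraMap (MvPolynomial (Fin 3) ℤ) _ 2 :=
      (map_ofNat _ 2).symm
    rw [h2, ← map_mul]
    intro h
    rw [map_eq_zero_iff _ (IsFractionRing.injective _ _)] at h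
    rcases mul_eq_zero.1 h with h | h
    · exact two_ne_zero h
    · exact MvPolynomial.X_ne_zero _ h
  · simp only [map_sub, pow_succ, pow_zero, one_mul, Derivation.leibniz, dx, dy, da, smul_eq_mul]
    ring
lemma deriv_evST {F : Type*} [Field F] (δ : Derivation ℤ F F) (a b x : F) (da : δ a = 0)
    (db : δ b = 0) (g : Polynomial (MvPolynomial (Fin 2) ℤ)) :
    δ (evST a b x g) = δ x * evST a b x (Polynomial.derivative g) := by
  have hc : ∀ r : MvPolynomial (Fin 2) ℤ, δ (evST a b x (Polynomial.C r)) = 0 := by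
    intro r
    induction r using MvPolynomial.induction_on with
    | C n => simp [evST]
    | add p q hp hq => simp [hp, hq]
    | mul_X p i hp =>
      rw [Polynomial.C_mul, map_mul, Derivation.leibniz, hp]
      fin_cases i <;> simp [da, db]
  induction g using Polynomial.induction_on' with
  | add p q hp hq => simp only [map_add, hp, hq, mul_add]
  | monomial n r =>
    rw [← Polynomial.C_mul_X_pow_eq_monomial, map_mul, Derivation.leibniz, hc, map_pow,
      Derivation.leibniz_pow]
    simp [Polynomial.derivative_X_pow]
    ring

lemma map_Ψ₂Sq_short {R F : Type*} [CommRing R] [CommRing F] (W : WeierstrassCurve R)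
    (h1 : W.a₁ = 0) (h2 : W.a₂ = 0) (h3 : W.a₃ = 0) (φ : Polynomial R →+* F) :
    φ W.Ψ₂Sq = 4 * (φ X ^ 3 + φ (C W.a₄) * φ X + φ (C W.a₆)) := by
  simp [map_ofNat, WeierstrassCurve.Ψ₂Sq, h1, h2, h3, WeierstrassCurve.b₂, WeierstrassCurve.b₄,
      WeierstrassCurve.b₆]
  ring

lemma map_Ψ₃_short {R F : Type*} [CommRing R] [CommRing F] (W : WeierstrassCurve R)
    (h1 : W.a₁ = 0) (h2 : W.a₂ = 0) (h3 : W.a₃ = 0) (φ : Polynomial R →+* F) :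
    φ W.Ψ₃ = 3 * φ X ^ 4 + 6 * φ (C W.a₄) * φ X ^ 2 + 12 * φ (C W.a₆) * φ X - φ (C W.a₄) ^ 2 := by
  simp [map_ofNat, WeierstrassCurve.Ψ₃, h1, h2, h3, WeierstrassCurve.b₂, WeierstrassCurve.b₄,
      WeierstrassCurve.b₆, WeierstrassCurve.b₈]
  ring

lemma map_preΨ₄_short {R F : Type*} [CommRing R] [CommRing F] (W : WeierstrassCurve R)
    (h1 : W.a₁ = 0) (h2 : W.a₂ = 0) (h3 : W.a₃ = 0) (φ : Polynomial R →+* F) (x a b : F)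
    (hx : φ X = x) (ha : φ (C W.a₄) = a) (hb : φ (C W.a₆) = b) :
    φ W.preΨ₄ = 2*x^6+10*a*x^4+40*b*x^3-10*a^2*x^2-8*a*b*x-2*a^3-16*b^2 := by
  subst hx ha hb
  simp [map_ofNat, WeierstrassCurve.preΨ₄, h1, h2, h3, WeierstrassCurve.b₂, WeierstrassCurve.b₄,
      WeierstrassCurve.b₆, WeierstrassCurve.b₈]
  ring

lemma map_deriv_cubic {R F : Type*} [CommRing R] [CommRing F] (s t : R) (φ : Polynomial R →+* F) :
    φ (derivative (X ^ 3 + C s * X + C t)) = 3 * φ X ^ 2 + φ (C s) := by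
  simp [map_ofNat]
  ring

/-- Toda-type identity for odd division polynomials. -/
theorem preΨ'_toda (n : ℕ) (hn : ¬ Even n) (f : Polynomial (MvPolynomial (Fin 2) ℤ))
    (hf : f = X ^ 3 + C (MvPolynomial.X 0) * X + C (MvPolynomial.X 1)) :
    ∃ q : Polynomial (MvPolynomial (Fin 2) ℤ),
    (Wst ℤ).preΨ' n * (2 * f * derivative (derivative ((Wst ℤ).preΨ' n)) +
      derivative f * derivative ((Wst ℤ).preΨ' n)) - 2 * f * derivative ((Wst ℤ).preΨ' n) ^ 2 =
      (n : Polynomial (MvPolynomial (Fin 2) ℤ)) ^ 2 * q := by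
  obtain ⟨F, _, δ, a, b, x, y, hxy, hy, da, db, dx, dy, hinj⟩ := exists_field_derivation
  obtain ⟨XX, YY, l, c⟩ := exists_ptChain a b x y hxy hy
  set Φ := evST a b x with hΦ
  set w : ℕ → F := fun n => Φ ((Wst ℤ).preΨ' n) * if Even n then 2 * y else 1 with hw
  have hΦf : Φ f = y ^ 2 := by simp [hf, hΦ, hxy]
  have hΨ : Φ (Wst ℤ).Ψ₂Sq = 4 * y ^ 2 := by
    rw [← hΦf, hf]
    rw [map_Ψ₂Sq_short _ rfl rfl rfl]
    simp [Wst]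
  have hne : ∀ k, 1 ≤ k → w k ≠ 0 := by
    intro k hk
    have h1 : Φ ((Wst ℤ).preΨ' k) ≠ 0 := by
      intro h
      have := (map_eq_zero_iff _ hinj).1 h
      exact WeierstrassCurve.preΨ'_ne_zero (W := Wst ℤ) (n := k) (by
        exact_mod_cast (by omega : k ≠ 0)) this
    simp only [hw]
    split_ifs
    · exact mul_ne_zero h1 hy
    · simpa using h1
  have w0 : w 0 = 0 := by simp [hw]
  have w1 : w 1 = 1 := by simp [hw]
  have w2 : w 2 = 2 * y := by simp [hw]
  have w3 : w 3 = 3*x^4+6*a*x^2+12*b*x-a^2 := by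
    have : ¬ Even 3 := by decide
    simp only [hw, this, if_false, mul_one, WeierstrassCurve.preΨ'_three]
    rw [map_Ψ₃_short _ rfl rfl rfl]
    simp [Wst, hΦ]
  have w4 : w 4 = (2*x^6+10*a*x^4+40*b*x^3-10*a^2*x^2-8*a*b*x-2*a^3-16*b^2)*(2*y) := by
    have : Even 4 := by decide
    simp only [hw, this, if_true, WeierstrassCurve.preΨ'_four]
    rw [map_preΨ₄_short _ rfl rfl rfl Φ x a b (by simp [hΦ]) (by simp [hΦ, Wst])
      (by simp [hΦ, Wst])]
  have wodd : ∀ m, w (2*(m+2)+1) = w (m+4)*w (m+2)^3 - w (m+1)*w (m+3)^3 := by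
    intro m
    simp only [hw, WeierstrassCurve.preΨ'_odd]
    have : ¬ Even (2 * (m + 2) + 1) := by simp [parity_simps]
    by_cases hm : Even m
    · simp [this, hm, parity_simps, hΨ]
      ring
    · simp [this, hm, parity_simps, hΨ]
      ring
  have weven : ∀ m, w (2*(m+3))*w 2 =
      w (m+2)^2*w (m+3)*w (m+5) - w (m+1)*w (m+3)*w (m+4)^2 := by
    intro m
    simp only [hw, WeierstrassCurve.preΨ'_even]
    by_cases hm : Even m
    · simp [hm, parity_simps]
      ring
    · simp [hm, parity_simps]
      ring
  have T := c.toda_deriv δ da dx dy w hne w1 w2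
    (c.toda w hne w0 w1 w2 w3 w4 wodd weven)
  obtain ⟨k, rfl⟩ : ∃ k, n = k + 1 := ⟨n - 1, by
    have : n ≠ 0 := by rintro rfl; simp at hn
    omega⟩
  have hk : Even k := by by_contra h; exact hn (by simp [parity_simps, h])
  refine ⟨2 * f * ((Wst ℤ).preΨ' (k + 2) * (Wst ℤ).preΨ' k), ?_⟩
  apply hinj
  have T1 := T k
  simp only [hw, hn, hk, parity_simps, if_true, if_false, mul_one, not_false_eq_true] at T1
  have D := deriv_evST δ a b x da db
  have Df : Φ (derivative f) = 3 * x ^ 2 + a := by rw [hf, map_deriv_cubic]; simp [hΦ]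
  have h2 : (2:F) ≠ 0 := left_ne_zero_of_mul hy
  have d2 : δ (2:F) = 0 := by exact_mod_cast Derivation.map_natCast δ 2
  rw [← hΦ] at D
  simp only [D, dx, Derivation.leibniz, smul_eq_mul, dy, d2] at T1
  apply mul_left_cancel₀ h2
  simp only [map_sub, map_add, map_mul, map_pow, map_ofNat, map_natCast, hΦf, Df]
  linear_combination T1
lemma eval_preΨ'_odd_ne_zero {k : Type*} [Field k] (W : WeierstrassCurve k)
    (h1 : W.a₁ = 0) (h2 : W.a₂ = 0) (h3 : W.a₃ = 0) (r : k)
    (hr : r ^ 3 + W.a₄ * r + W.a₆ = 0) (hr' : 3 * r ^ 2 + W.a₄ ≠ 0) (m : ℕ) :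
    (W.preΨ' (2 * m + 1)).eval r ≠ 0 := by
  have e2 : W.Ψ₂Sq.eval r = 0 := by
    have := map_Ψ₂Sq_short W h1 h2 h3 (Polynomial.evalRingHom r)
    simpa [hr] using this
  have e3 : W.Ψ₃.eval r = - (3 * r ^ 2 + W.a₄) ^ 2 := by
    have := map_Ψ₃_short W h1 h2 h3 (Polynomial.evalRingHom r)
    simp only [Polynomial.coe_evalRingHom, Polynomial.eval_X, Polynomial.eval_C] at this
    rw [this]
    linear_combination 12 * r * hr
  induction m using Nat.strong_induction_on with
  | _ m ih =>
    match m, ih with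
    | 0, _ => simp
    | 1, _ =>
      rw [show 2 * 1 + 1 = 3 from rfl, WeierstrassCurve.preΨ'_three, e3]
      simpa using hr'
    | j + 2, ih =>
      rw [WeierstrassCurve.preΨ'_odd]
      rcases Nat.even_or_odd' j with ⟨i, rfl | rfl⟩
      · have a1 := ih i (by omega)
        have a2 := ih (i + 1) (by omega)
        rw [show 2 * (i + 1) + 1 = 2 * i + 3 by ring] at a2
        simp [e2, a1, a2]
      · have a1 := ih (i + 1) (by omega)
        have a2 := ih (i + 2) (by omega)
        rw [show 2 * (i + 1) + 1 = 2 * i + 1 + 2 by ring] at a1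
        rw [show 2 * (i + 2) + 1 = 2 * i + 1 + 4 by ring] at a2
        have : ¬ Even (2 * i + 1) := by simp [parity_simps]
        simp [e2, a1, a2, this]

lemma exists_simple_root {k : Type*} [Field k] [IsAlgClosed k] (c3 : (3 : k) ≠ 0) (a b : k)
    (h : a ≠ 0 ∨ b ≠ 0) : ∃ r : k, r ^ 3 + a * r + b = 0 ∧ 3 * r ^ 2 + a ≠ 0 := by
  obtain ⟨r, hr⟩ := IsAlgClosed.exists_root (X ^ 3 + C a * X + C b : Polynomial k) (by
    have : (X ^ 3 + C a * X + C b : Polynomial k).degree = 3 := by compute_degree!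
    rw [this]; decide)
  have hr0 : r ^ 3 + a * r + b = 0 := by simpa using hr
  by_cases h0 : 3 * r ^ 2 + a = 0
  · refine ⟨-2 * r, ?_, ?_⟩
    · linear_combination hr0 - 3 * r * h0
    · intro h9
      have : 3 * 3 * r ^ 2 = 0 := by linear_combination h9 - h0
      have hr2 : r = 0 := by simpa [c3] using this
      subst hr2
      simp at h0 hr0
      simp [h0, hr0] at h
  · exact ⟨r, hr0, h0⟩

lemma map_preΨ'_ne_zero {k : Type*} [Field k] (c3 : (3 : k) ≠ 0)
    (φ : MvPolynomial (Fin 2) ℤ →+* k) (h : φ (MvPolynomial.X 0) ≠ 0 ∨ φ (MvPolynomial.X 1) ≠ 0)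
    (n : ℕ) (hn : Odd n) : ((Wst ℤ).preΨ' n).map φ ≠ 0 := by
  obtain ⟨m, rfl⟩ := hn
  set ι := algebraMap k (AlgebraicClosure k) with hι
  have hinj : Function.Injective ι := ι.injective
  obtain ⟨r, h1, h2⟩ := exists_simple_root (k := AlgebraicClosure k)
    (by rw [← map_ofNat ι 3]; exact (map_ne_zero_iff _ hinj).2 c3)
    (ι (φ (MvPolynomial.X 0))) (ι (φ (MvPolynomial.X 1)))
    (h.imp (map_ne_zero_iff _ hinj).2 (map_ne_zero_iff _ hinj).2)
  have key := eval_preΨ'_odd_ne_zero ((Wst ℤ).map (ι.comp φ)) (by simp [Wst]) (by simp [Wst])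
    (by simp [Wst]) r h1 h2 m
  intro h0
  apply key
  rw [WeierstrassCurve.map_preΨ', ← Polynomial.map_map, h0]
  simp
lemma theta_dvd_aux {R : Type*} [CommRing R] [IsDomain R] (p q : ℕ) [hp : Fact p.Prime] [CharP R p]
    (hpq : p = 2 * q + 1) (hq : 2 ≤ q) (s t : R) (κ θ : Polynomial R)
    (hode : 2 * (X ^ 3 + C s * X + C t) * derivative κ +
      derivative (X ^ 3 + C s * X + C t) * κ = 0)
    (hcoef : ∀ k, κ.coeff (p * k + (p - 1)) = (k + 1) * θ.coeff (k + 1))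
    (hκ : κ.natDegree ≤ 2 * q ^ 2 + 2 * q - 1)
    (htop : κ.coeff (2 * q ^ 2 + 2 * q - 1) = ((2 * q ^ 2 + 2 * q : ℕ) : R))
    (hθ : θ.natDegree ≤ q) (i : ℕ) (hi : 1 ≤ i) : θ.coeff q ∣ θ.coeff i := by
  set f : Polynomial R := X ^ 3 + C s * X + C t with hf
  have hp0 : p ≠ 0 := hp.out.ne_zero
  have hpR : (p : R) = 0 := CharP.cast_eq_zero R p
  have hqR : (2 * q + 1 : R) = 0 := by rw [hpq] at hpR; exact_mod_cast hpR
  have hcast : ∀ n : ℕ, 1 ≤ n → n < p → (n : R) ≠ 0 := by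
    intro n h1 h2 h0
    rw [CharP.cast_eq_zero_iff R p] at h0
    exact absurd (Nat.le_of_dvd h1 h0) (by omega)
  have h2 : (2 : R) ≠ 0 := by exact_mod_cast hcast 2 (by norm_num) (by omega)
  have h2P : (2 : Polynomial R) ≠ 0 := by
    intro h; apply h2
    have := congrArg (fun g => Polynomial.coeff g 0) h
    simpa using this
  have hqP : (2 * q + 1 : Polynomial R) = 0 := by
    have := congrArg C hqR
    simpa [map_ofNat] using this
  have hfm : f.Monic := by rw [hf]; monicity!
  have hfd : f.natDegree = 3 := by rw [hf]; compute_degree!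
  have hder : derivative (κ * f ^ (q + 1)) = 0 := by
    apply mul_left_cancel₀ h2P
    rw [mul_zero, derivative_mul, derivative_pow]
    simp only [Nat.add_sub_cancel, map_natCast]
    push_cast
    linear_combination f ^ q * hode + κ * f ^ q * derivative f * hqP
  set c := contract p (κ * f ^ (q + 1)) with hc
  have hcx : expand R p c = κ * f ^ (q + 1) := expand_contract p hder hp0
  set ft : Polynomial R := X ^ 3 + C (s ^ p) * X + C (t ^ p) with hft
  have hfp : f ^ p = expand R p ft := by
    rw [hf, add_pow_char, add_pow_char]
    simp only [hft, mul_pow, map_add, map_mul, map_pow, expand_X, expand_C]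
    ring
  have hftm : ft.Monic := by rw [hft]; monicity!
  have hftd : ft.natDegree = 3 := by rw [hft]; compute_degree!
  have e1 : κ * expand R p ft = expand R p c * f ^ q := by
    rw [hcx, ← hfp, hpq]; ring
  have hcontr : ∀ a b : Polynomial R, contract p (expand R p a * b) = a * contract p b := by
    intro a b
    rw [mul_comm, contract_mul_expand hp0, mul_comm]
  set h := (f ^ q).coeff (p - 1) with hh
  have e2 : ft * derivative θ = C h * c := by
    have := congrArg (contract p) (congrArg (fun g => X * g) e1)
    have l1 : contract p (X * κ) = X * derivative θ := by
      ext n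
      rw [coeff_contract hp0]
      cases n with
      | zero => simp
      | succ n =>
        rw [show (n + 1) * p = (p * n + (p - 1)) + 1 by
          have : 1 ≤ p := by omega
          zify [this]; ring, coeff_X_mul, coeff_X_mul, hcoef, coeff_derivative]
        ring
    have l2 : contract p (X * f ^ q) = X * C h := by
      ext n
      rw [coeff_contract hp0]
      match n with
      | 0 => simp
      | 1 =>
        rw [show 1 * p = (p - 1) + 1 by omega, coeff_X_mul, show 1 = 0 + 1 from rfl, coeff_X_mul]
        simp [hh]
      | n + 2 =>
        rw [show (n + 2) * p = (n * p + (p + (p - 1))) + 1 by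
          have : 1 ≤ p := by omega
          zify [this]; ring, coeff_X_mul, coeff_X_mul, coeff_C_succ]
        apply coeff_eq_zero_of_natDegree_lt
        rw [hfm.natDegree_pow, hfd]
        have := Nat.zero_le (n * p)
        omega
    beta_reduce at this
    rw [show X * (κ * expand R p ft) = expand R p ft * (X * κ) by ring,
      show X * (expand R p c * f ^ q) = expand R p c * (X * f ^ q) by ring, hcontr, hcontr, l1, l2]
      at this
    apply mul_left_cancel₀ (X_ne_zero (R := R))
    linear_combination this
  have e3 : C h ∣ derivative θ := by
    have hd : C h ∣ ft * derivative θ := ⟨c, e2⟩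
    rw [C_dvd_iff_dvd_coeff]
    have hz : (ft * derivative θ).map (Ideal.Quotient.mk (Ideal.span {h})) = 0 := by
      rw [e2, Polynomial.map_mul, map_C, Ideal.Quotient.eq_zero_iff_mem.2
        (Ideal.mem_span_singleton_self h)]
      simp
    rw [Polynomial.map_mul, (hftm.map _).mul_right_eq_zero_iff] at hz
    intro n
    have := congrArg (fun g => Polynomial.coeff g n) hz
    simp only [coeff_map, coeff_zero] at this
    rwa [Ideal.Quotient.eq_zero_iff_mem, Ideal.mem_span_singleton] at this
  have hdθ : (derivative θ).natDegree ≤ q - 1 :=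
    (natDegree_derivative_le θ).trans (by omega)
  have t1 : (ft * derivative θ).coeff (3 + (q - 1)) = q * θ.coeff q := by
    rw [coeff_mul_add_eq_of_natDegree_le hftd.le hdθ, coeff_derivative, ← hftd, hftm.coeff_natDegree,
      show q - 1 + 1 = q by omega, ← Nat.cast_succ, Nat.succ_eq_add_one, show q - 1 + 1 = q by omega]
    ring
  have t2 : c.coeff (3 + (q - 1)) = ((2 * q ^ 2 + 2 * q : ℕ) : R) := by
    rw [hc, coeff_contract hp0, show (3 + (q - 1)) * p = (2 * q ^ 2 + 2 * q - 1) + (q + 1) * 3 by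
      have a1 : 1 ≤ q := by omega
      have a2 : 1 ≤ 2 * q ^ 2 + 2 * q := by nlinarith
      zify [a1, a2]; rw [hpq]; push_cast; ring,
      coeff_mul_add_eq_of_natDegree_le hκ (by rw [hfm.natDegree_pow, hfd]), htop]
    have : (f ^ (q + 1)).coeff ((q + 1) * 3) = 1 := by
      have := (hfm.pow (q + 1)).coeff_natDegree
      rwa [hfm.natDegree_pow, hfd] at this
    rw [this, mul_one]
  have t3 : h = θ.coeff q := by
    rw [e2, coeff_C_mul, t2] at t1
    push_cast at t1
    linear_combination (-2) * t1 + (h * (2 * q + 1) - θ.coeff q) * hqR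
  rw [← t3]
  obtain ⟨j, rfl⟩ : ∃ j, i = j + 1 := ⟨i - 1, by omega⟩
  by_cases hj : j + 1 ≤ q
  · have := (C_dvd_iff_dvd_coeff _ _).1 e3 j
    rw [coeff_derivative] at this
    have hu : IsUnit ((j + 1 : ℕ) : R) := by
      rw [CharP.isUnit_natCast_iff hp.out]
      intro h0
      exact absurd (Nat.le_of_dvd (by omega) h0) (by omega)
    push_cast at hu
    exact hu.dvd_mul_right.1 this
  · rw [coeff_eq_zero_of_natDegree_lt (by omega)]
    exact dvd_zero _
lemma theta_dvd_zmod (p : ℕ) (hp : p.Prime) (hp5 : 5 ≤ p)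
    (θ : Polynomial (MvPolynomial (Fin 2) (ZMod p)))
    (hθ : θ.comp (Polynomial.X ^ p) =
      ((Wst ℤ).preΨ' p).map (MvPolynomial.map (Int.castRingHom (ZMod p)))) :
    θ.natDegree ≤ (p - 1) / 2 ∧ ∀ i, 1 ≤ i → θ.coeff ((p - 1) / 2) ∣ θ.coeff i := by
  have : Fact p.Prime := ⟨hp⟩
  have hodd : Odd p := hp.odd_of_ne_two (by omega)
  obtain ⟨q, hpq⟩ := hodd
  have hq2 : (p - 1) / 2 = q := by omega
  rw [hq2]
  set ρ : MvPolynomial (Fin 2) ℤ →+* MvPolynomial (Fin 2) (ZMod p) :=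
    MvPolynomial.map (Int.castRingHom (ZMod p)) with hρ
  set ψ := (Wst ℤ).preΨ' p with hψ
  rw [← expand_eq_comp_X_pow] at hθ
  have hne : ¬ Even p := by rw [Nat.not_even_iff_odd]; exact ⟨q, hpq⟩
  have hnum : (p ^ 2 - 1) / 2 = 2 * q ^ 2 + 2 * q := by
    rw [hpq, show (2 * q + 1) ^ 2 - 1 = 2 * (2 * q ^ 2 + 2 * q) by
      rw [show (2 * q + 1) ^ 2 = 2 * (2 * q ^ 2 + 2 * q) + 1 by ring]; rfl]
    omega
  have hψdeg : ψ.natDegree ≤ 2 * q ^ 2 + 2 * q := by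
    have := (Wst ℤ).natDegree_preΨ'_le p
    rwa [if_neg hne, hnum] at this
  have hψtop : ψ.coeff (2 * q ^ 2 + 2 * q) = (p : MvPolynomial (Fin 2) ℤ) := by
    have := (Wst ℤ).coeff_preΨ' p
    rw [if_neg hne, if_neg hne, hnum] at this
    exact this
  have hθdeg : θ.natDegree ≤ q := by
    have h1 : (expand _ p θ).natDegree ≤ 2 * q ^ 2 + 2 * q := by
      rw [hθ]; exact (natDegree_map_le).trans hψdeg
    rw [natDegree_expand] at h1
    by_contra hc
    push Not at hc
    nlinarith [Nat.mul_le_mul hc hpq.ge]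
  refine ⟨hθdeg, ?_⟩
  have hker : ∀ g : Polynomial (MvPolynomial (Fin 2) ℤ), g.map ρ = 0 →
      ∃ g', g = (p : Polynomial (MvPolynomial (Fin 2) ℤ)) * g' := by
    intro g hg
    have : C (MvPolynomial.C (p : ℤ)) ∣ g := by
      rw [C_dvd_iff_dvd_coeff]
      intro n
      rw [MvPolynomial.C_dvd_iff_zmod]
      have := congrArg (fun g => Polynomial.coeff g n) hg
      simpa only [coeff_map, coeff_zero] using this
    obtain ⟨g', hg'⟩ := this
    refine ⟨g', ?_⟩
    rw [hg']; simp
  obtain ⟨κ, hκ⟩ := hker (derivative ψ) (by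
    rw [← derivative_map, ← hθ, derivative_expand]
    simp)
  set P : Polynomial (MvPolynomial (Fin 2) ℤ) := (p : Polynomial (MvPolynomial (Fin 2) ℤ)) with hP
  have hP0 : P ≠ 0 := by rw [hP]; exact_mod_cast hp.ne_zero
  have hp0 : (p : MvPolynomial (Fin 2) ℤ) ≠ 0 := by exact_mod_cast hp.ne_zero
  have hPκ : ∀ n : ℕ, (n + 1 : MvPolynomial (Fin 2) ℤ) * ψ.coeff (n + 1) = p * κ.coeff n := by
    intro n
    have := congrArg (fun g => Polynomial.coeff g n) hκ
    simp only [coeff_derivative, hP, coeff_natCast_mul] at this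
    rw [← this]; ring
  obtain ⟨r, hr⟩ := preΨ'_toda p hne _ rfl
  set f : Polynomial (MvPolynomial (Fin 2) ℤ) :=
    X ^ 3 + C (MvPolynomial.X 0) * X + C (MvPolynomial.X 1) with hf
  rw [← hψ, ← hP, hκ, derivative_mul, hP, derivative_natCast, ← hP] at hr
  have h1 : ψ * (2 * f * derivative κ + derivative f * κ) = P * (r + 2 * f * κ ^ 2) := by
    apply mul_left_cancel₀ hP0
    linear_combination hr
  have hψ0 : ψ.map ρ ≠ 0 := by
    have := map_preΨ'_ne_zero (k := FractionRing (MvPolynomial (Fin 2) (ZMod p)))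
      (by
        have h3 : ((3 : ℕ) : FractionRing (MvPolynomial (Fin 2) (ZMod p))) ≠ 0 := by
          rw [Ne, CharP.cast_eq_zero_iff _ p]
          intro h; have := Nat.le_of_dvd (by norm_num) h; omega
        exact_mod_cast h3)
      ((algebraMap (MvPolynomial (Fin 2) (ZMod p)) _).comp ρ)
      (Or.inl (by
        rw [RingHom.comp_apply, hρ, MvPolynomial.map_X]
        exact (map_ne_zero_iff _ (IsFractionRing.injective _ _)).2 (MvPolynomial.X_ne_zero _)))
      p ⟨q, hpq⟩
    intro h0
    apply this
    rw [← Polynomial.map_map, ← hψ, h0]; simp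
  have hode : (2 * f * derivative κ + derivative f * κ).map ρ = 0 := by
    have h2 := congrArg (Polynomial.map ρ) h1
    rw [Polynomial.map_mul, Polynomial.map_mul] at h2
    have : P.map ρ = 0 := by
      rw [hP, Polynomial.map_natCast]; exact CharP.cast_eq_zero _ p
    rw [this, zero_mul] at h2
    exact (mul_eq_zero.1 h2).resolve_left hψ0
  have hfm : f.map ρ = X ^ 3 + C (MvPolynomial.X 0) * X + C (MvPolynomial.X 1) := by
    simp [hf, hρ]
  have hpos : 1 ≤ 2 * q ^ 2 + 2 * q := by
    have : 1 ≤ q := by omega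
    omega
  refine theta_dvd_aux p q hpq (by omega) (MvPolynomial.X 0) (MvPolynomial.X 1) (κ.map ρ) θ
    ?_ ?_ ?_ ?_ hθdeg
  · rw [← hfm, derivative_map, derivative_map]
    simpa only [Polynomial.map_add, Polynomial.map_mul, Polynomial.map_ofNat] using hode
  · intro k
    have e1 : ψ.coeff (p * k + (p - 1) + 1) * (k + 1) = κ.coeff (p * k + (p - 1)) := by
      apply mul_left_cancel₀ hp0
      rw [← hPκ]
      have : ((p * k + (p - 1) : ℕ) : MvPolynomial (Fin 2) ℤ) + 1 = p * (k + 1) := by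
        have : p * k + (p - 1) + 1 = p * (k + 1) := by
          rw [mul_add]; omega
        exact_mod_cast this
      rw [this]; ring
    rw [coeff_map, ← e1, map_mul, ← coeff_map, ← hθ,
      show p * k + (p - 1) + 1 = p * (k + 1) by rw [mul_add]; omega, coeff_expand_mul' hp.pos]
    simp
    ring
  · refine natDegree_map_le.trans ?_
    rw [natDegree_le_iff_coeff_eq_zero]
    intro n hn
    apply mul_left_cancel₀ hp0
    rw [← hPκ, coeff_eq_zero_of_natDegree_lt (by omega)]
    simp
  · have e1 : ((2 * q ^ 2 + 2 * q : ℕ) : MvPolynomial (Fin 2) ℤ) =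
        κ.coeff (2 * q ^ 2 + 2 * q - 1) := by
      apply mul_left_cancel₀ hp0
      rw [← hPκ, show 2 * q ^ 2 + 2 * q - 1 + 1 = 2 * q ^ 2 + 2 * q by omega, hψtop,
        ← Nat.cast_succ, Nat.succ_eq_add_one,
        show 2 * q ^ 2 + 2 * q - 1 + 1 = 2 * q ^ 2 + 2 * q by omega]
      ring
    rw [coeff_map, ← e1, map_natCast]

lemma relPrime_aux (p : ℕ) (hp : p.Prime) (hp5 : 5 ≤ p) (K : Type*) [Field K] [CharP K p]
    (θ : Polynomial (MvPolynomial (Fin 2) (ZMod p)))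
    (hθ : θ.comp (Polynomial.X ^ p) =
      ((Wst ℤ).preΨ' p).map (MvPolynomial.map (Int.castRingHom (ZMod p))))
    (q : MvPolynomial (Fin 2) K) (hq : Prime q)
    (hdvd : ∀ i, q ∣ MvPolynomial.map (ZMod.castHom (dvd_refl p) K) (θ.coeff i)) : False := by
  have : (Ideal.span {q}).IsPrime := (Ideal.span_singleton_prime hq.ne_zero).2 hq
  set σ := MvPolynomial.map (σ := Fin 2) (ZMod.castHom (dvd_refl p) K) with hσ
  set μ : MvPolynomial (Fin 2) K →+* FractionRing (MvPolynomial (Fin 2) K ⧸ Ideal.span {q}) :=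
    (algebraMap (MvPolynomial (Fin 2) K ⧸ Ideal.span {q}) _).comp
      (Ideal.Quotient.mk (Ideal.span {q})) with hμ
  have hμ0 : ∀ z, μ z = 0 ↔ q ∣ z := by
    intro z
    rw [hμ, RingHom.comp_apply, map_eq_zero_iff _ (IsFractionRing.injective _ _),
      Ideal.Quotient.eq_zero_iff_mem, Ideal.mem_span_singleton]
  have h3 : (3 : FractionRing (MvPolynomial (Fin 2) K ⧸ Ideal.span {q})) ≠ 0 := by
    have h3K : ((3 : ℕ) : K) ≠ 0 := by
      rw [Ne, CharP.cast_eq_zero_iff K p]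
      intro h; have := Nat.le_of_dvd (by norm_num) h; omega
    have := (map_ne_zero (μ.comp MvPolynomial.C)).2 h3K
    rw [map_natCast] at this
    exact_mod_cast this
  have hX : μ (MvPolynomial.X 0) ≠ 0 ∨ μ (MvPolynomial.X 1) ≠ 0 := by
    by_contra hc
    push Not at hc
    rw [hμ0, hμ0] at hc
    have h0 : Prime (MvPolynomial.X 0 : MvPolynomial (Fin 2) K) := MvPolynomial.X_prime
    have := (hq.irreducible.associated_of_dvd h0.irreducible hc.1).symm.dvd.trans hc.2
    rw [MvPolynomial.X_dvd_X] at this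
    simp at this
  refine map_preΨ'_ne_zero h3 ((μ.comp σ).comp (MvPolynomial.map (Int.castRingHom (ZMod p))))
    (by simpa [hσ] using hX) p (hp.odd_of_ne_two (by omega)) ?_
  rw [← Polynomial.map_map, ← hθ]
  have : θ.map (μ.comp σ) = 0 := by
    ext i
    rw [coeff_map, RingHom.comp_apply, coeff_zero, hμ0]
    exact hdvd i
  rw [Polynomial.map_comp, this, zero_comp]
/-- In `K[s,t]`, the leading coefficient `a_{(p-1)/2}` of `θ_{s,t}` divides every middle
coefficient `a_{(p-1)/2+pi}` for `1 ≤ i ≤ (p-3)/2`, and `a_{(p-1)/2}` is relatively prime to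
the constant coefficient `a_{(p²-1)/2}`. -/
theorem theta_leadingCoeff_dvd_and_relPrime (p : ℕ) (hp : p.Prime) (hp5 : 5 ≤ p)
    (K : Type*) [Field K] [CharP K p]
    (θ : Polynomial (MvPolynomial (Fin 2) (ZMod p)))
    (hθ : θ.comp (Polynomial.X ^ p) =
      ((Wst ℤ).preΨ (p : ℤ)).map (MvPolynomial.map (Int.castRingHom (ZMod p)))) :
    (∀ i, 1 ≤ i → i ≤ (p - 3) / 2 →
      MvPolynomial.map (ZMod.castHom (dvd_refl p) K) (θ.coeff ((p - 1) / 2)) ∣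
        MvPolynomial.map (ZMod.castHom (dvd_refl p) K) (θ.coeff ((p - 1) / 2 - i))) ∧
    IsRelPrime (MvPolynomial.map (ZMod.castHom (dvd_refl p) K) (θ.coeff ((p - 1) / 2)))
      (MvPolynomial.map (ZMod.castHom (dvd_refl p) K) (θ.coeff 0)) := by
  rw [WeierstrassCurve.preΨ_ofNat] at hθ
  obtain ⟨hdeg, hdvd⟩ := theta_dvd_zmod p hp hp5 θ hθ
  refine ⟨fun i h1 h2 => map_dvd _ (hdvd _ (by omega)), ?_⟩
  intro d hd1 hd2
  by_contra hu
  obtain ⟨q, hq, hqd⟩ : ∃ q : MvPolynomial (Fin 2) K, Prime q ∧ q ∣ d := by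
    by_cases hd : d = 0
    · exact ⟨MvPolynomial.X 0, MvPolynomial.X_prime, hd ▸ dvd_zero _⟩
    · obtain ⟨q, hq, hqd⟩ := WfDvdMonoid.exists_irreducible_factor hu hd
      exact ⟨q, hq.prime, hqd⟩
  refine relPrime_aux p hp hp5 K θ hθ q hq fun i => ?_
  rcases Nat.eq_zero_or_pos i with rfl | hi
  · exact hqd.trans hd2
  · exact (hqd.trans hd1).trans (map_dvd _ (hdvd i hi))
end
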